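/- arXiv:2110.10146 — 3 statements merged into one kernel-verified Lean document; each statement's English description precedes it below -/
import Mathlib

section
/- For every integer k with 2 ≤ k ≤ 20, there exists a unique real σ > 1 such that P_k(σ) = P(σ); moreover P_k(s) > P(s) for all s with 1 < s < σ, and P_k(s) < P(s) for all s > σ. -/
open MeasureTheory Real

/-- The prime zeta function `P(s) = ∑_p p^{-s}` (sum over all primes). -/
noncomputable def primeZeta (s : ℝ) : ℝ := ∑' p : Nat.Primes, (p.1 : ℝ) ^ (-s)

/-- The set of `k`-almost primes: positive integers with exactly `k` prime
factors counted with multiplicity. -/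
def almostPrimes (k : ℕ) : Set ℕ := {n | 0 < n ∧ n.primeFactorsList.length = k}

/-- `P_k(s) = ∑_{n ∈ N_k} n^{-s}`; note `P_0(s) = 1` since `N_0 = {1}`. -/
noncomputable def Pk (k : ℕ) (s : ℝ) : ℝ := ∑' n : almostPrimes k, (n.1 : ℝ) ^ (-s)

/-- Translated sum `f(A, h) = ∑_{a ∈ A} 1/(a (log a + h))`. -/
noncomputable def transSum (A : Set ℕ) (h : ℝ) : ℝ :=
  ∑' a : A, 1 / ((a.1 : ℝ) * (Real.log a.1 + h))

/-!
Factoring an almost prime as `m * p` with `p` its largest prime factor gives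
`P_{k+1}(s) / P(s) = ∑_{m ∈ N_k} m^{-s} (∑_p p^{-s}) / P(s)`, where `p` runs over a final segment of
the primes. Increasing `s` moves the weight `p^{-s}` towards small primes, so each summand
decreases, and hence so does `P_k / P` for `k ≥ 2`.

Counting the factorizations `n = m * p` of `n ∈ N_{k+1}`, of which there are at least one and at
most `k + 1`, gives `P_{k+1} ≤ P_k P ≤ (k + 1) P_{k+1}`, hence `P_k ≤ P^k ≤ k! P_k`. As
`P(2) < 1` and `P(s) → ∞` for `s → 1+`, the ratio `P_k / P` is at most `1` at `s = 2` and at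
least `1` near `s = 1`.
-/

open Filter Topology

/-- The Dirichlet series `∑_{a ∈ A} a^{-s}` of a set `A` of natural numbers, the common form of
`primeZeta` and `Pk`. For `s ≠ 0` an element `0 ∈ A` contributes `0`. -/
noncomputable def dirichletSum (A : Set ℕ) (s : ℝ) : ℝ := ∑' n : A, (n.1 : ℝ) ^ (-s)

section DirichletSum

variable {A B : Set ℕ} {s t : ℝ}

lemma summable_subtype_rpow_neg (A : Set ℕ) (hs : 1 < s) :
    Summable fun n : A => (n.1 : ℝ) ^ (-s) :=
  (Real.summable_nat_rpow.2 (by linarith)).subtype A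

lemma hasSum_dirichletSum (A : Set ℕ) (hs : 1 < s) :
    HasSum (fun n : A => (n.1 : ℝ) ^ (-s)) (dirichletSum A s) :=
  (summable_subtype_rpow_neg A hs).hasSum

lemma dirichletSum_pos (hA : ∃ n ∈ A, n ≠ 0) (hs : 1 < s) : 0 < dirichletSum A s := by
  obtain ⟨n, hn, hn0⟩ := hA
  have hn_pos : (0 : ℝ) < n := by positivity
  exact (summable_subtype_rpow_neg A hs).tsum_pos (fun _ => by positivity) ⟨n, hn⟩
    (Real.rpow_pos_of_pos hn_pos _)

lemma dirichletSum_union (hAB : Disjoint A B) (hs : 1 < s) :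
    dirichletSum (A ∪ B) s = dirichletSum A s + dirichletSum B s :=
  Summable.tsum_union_disjoint (f := fun n : ℕ => (n : ℝ) ^ (-s)) hAB
    (summable_subtype_rpow_neg A hs) (summable_subtype_rpow_neg B hs)

lemma dirichletSum_singleton (n : ℕ) (s : ℝ) : dirichletSum {n} s = (n : ℝ) ^ (-s) :=
  tsum_singleton n fun n : ℕ => (n : ℝ) ^ (-s)

lemma hasSum_dirichletSum_mul (A B : Set ℕ) (hs : 1 < s) (ht : 1 < t) :
    HasSum (fun x : A × B => (x.1.1 : ℝ) ^ (-s) * (x.2.1 : ℝ) ^ (-t))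
      (dirichletSum A s * dirichletSum B t) :=
  (hasSum_dirichletSum A hs).mul (hasSum_dirichletSum B ht)
    ((summable_subtype_rpow_neg A hs).mul_of_nonneg (summable_subtype_rpow_neg B ht)
      (fun _ => by positivity) fun _ => by positivity)

lemma rpow_neg_mul_rpow_neg_le {a b : ℝ} (hb : 0 < b) (hba : b ≤ a) (hst : s ≤ t) :
    a ^ (-t) * b ^ (-s) ≤ a ^ (-s) * b ^ (-t) := by
  have rpow_neg_eq {x : ℝ} (hx : 0 < x) : x ^ (-t) = x ^ (-s) * x ^ (s - t) := by
    rw [← Real.rpow_add hx]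
    ring_nf
  have hle : a ^ (s - t) ≤ b ^ (s - t) := Real.rpow_le_rpow_of_nonpos hb hba (by linarith)
  have ha : 0 < a := hb.trans_le hba
  calc a ^ (-t) * b ^ (-s) = a ^ (-s) * b ^ (-s) * a ^ (s - t) := by rw [rpow_neg_eq ha]; ring
    _ ≤ a ^ (-s) * b ^ (-s) * b ^ (s - t) := by gcongr
    _ = a ^ (-s) * b ^ (-t) := by rw [rpow_neg_eq hb]; ring

lemma dirichletSum_mul_dirichletSum_le (hB : 0 ∉ B) (hBA : ∀ a ∈ A, ∀ b ∈ B, b ≤ a)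
    (hs : 1 < s) (hst : s ≤ t) :
    dirichletSum A t * dirichletSum B s ≤ dirichletSum A s * dirichletSum B t := by
  have ht : 1 < t := hs.trans_le hst
  refine hasSum_le (fun ⟨⟨a, ha⟩, ⟨b, hb⟩⟩ => ?_) (hasSum_dirichletSum_mul A B ht hs)
    (hasSum_dirichletSum_mul A B hs ht)
  have hb_pos : 0 < b := Nat.pos_of_ne_zero (ne_of_mem_of_not_mem hb hB)
  exact rpow_neg_mul_rpow_neg_le (mod_cast hb_pos) (mod_cast hBA a ha b hb) hst

lemma antitoneOn_dirichletSum_div (hAB : A ⊆ B) (hB : 0 ∉ B)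
    (hA : ∀ a ∈ A, ∀ b ∈ B \ A, b ≤ a) :
    AntitoneOn (fun s => dirichletSum A s / dirichletSum B s) (Set.Ioi 1) := by
  intro s hs t ht hst
  rcases B.eq_empty_or_nonempty with rfl | ⟨b, hb⟩
  · simp [dirichletSum]
  have hB_pos {u : ℝ} : 1 < u → 0 < dirichletSum B u :=
    dirichletSum_pos ⟨b, hb, ne_of_mem_of_not_mem hb hB⟩
  have hB_split {u : ℝ} (hu : 1 < u) :
      dirichletSum B u = dirichletSum A u + dirichletSum (B \ A) u := by
    rw [← dirichletSum_union Set.disjoint_sdiff_right hu, Set.union_sdiff_cancel hAB]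
  have hcross : dirichletSum A t * dirichletSum (B \ A) s ≤
      dirichletSum A s * dirichletSum (B \ A) t :=
    dirichletSum_mul_dirichletSum_le (fun h => hB h.1) hA hs hst
  simp only [div_le_div_iff₀ (hB_pos ht) (hB_pos hs)]
  rw [hB_split hs, hB_split ht]
  linarith

lemma continuous_natCast_rpow_neg {n : ℕ} (hn : n ≠ 0) :
    Continuous fun s : ℝ => (n : ℝ) ^ (-s) :=
  continuous_const.rpow continuous_neg fun _ => Or.inl (mod_cast hn)

lemma continuousOn_dirichletSum (hA : 0 ∉ A) : ContinuousOn (dirichletSum A) (Set.Ioi 1) := by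
  have hne (n : A) : n.1 ≠ 0 := ne_of_mem_of_not_mem n.2 hA
  intro s hs
  obtain ⟨r, hr, hrs⟩ := exists_between (Set.mem_Ioi.1 hs)
  have hcont : ContinuousOn (dirichletSum A) (Set.Ioi r) := by
    refine continuousOn_tsum (fun n => (continuous_natCast_rpow_neg (hne n)).continuousOn)
      (summable_subtype_rpow_neg A hr) fun n x hx => ?_
    rw [Real.norm_of_nonneg (by positivity)]
    exact Real.rpow_le_rpow_of_exponent_le (mod_cast Nat.one_le_iff_ne_zero.2 (hne n))
      (neg_le_neg (Set.mem_Ioi.1 hx).le)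
  exact (hcont.continuousAt (Ioi_mem_nhds hrs)).continuousWithinAt

lemma tendsto_dirichletSum_atTop (hA : 0 ∉ A) (hdiv : ¬ Summable fun n : A => 1 / (n.1 : ℝ)) :
    Tendsto (dirichletSum A) (𝓝[>] 1) atTop := by
  refine tendsto_atTop.2 fun C => ?_
  obtain ⟨T, hT⟩ : ∃ T : Finset A, C < ∑ n ∈ T, 1 / (n.1 : ℝ) := by
    by_contra! hbound
    exact hdiv (summable_of_sum_le (fun _ => by positivity) hbound)
  have hcont : Continuous fun s : ℝ => ∑ n ∈ T, (n.1 : ℝ) ^ (-s) :=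
    continuous_finsetSum _ fun n _ =>
      continuous_natCast_rpow_neg (ne_of_mem_of_not_mem n.2 hA)
  have hT_near : ∀ᶠ s in 𝓝 (1 : ℝ), C < ∑ n ∈ T, (n.1 : ℝ) ^ (-s) :=
    hcont.continuousAt.eventually_const_lt (by simpa [Real.rpow_neg_one] using hT)
  filter_upwards [hT_near.filter_mono nhdsWithin_le_nhds, self_mem_nhdsWithin] with s hTs hs
  exact hTs.le.trans
    ((summable_subtype_rpow_neg A hs).sum_le_tsum T fun _ _ => by positivity)

end DirichletSum

section PrimeZeta

variable {s : ℝ}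

lemma primeZeta_eq_dirichletSum : primeZeta = dirichletSum {p | p.Prime} := rfl

lemma primeZeta_pos (hs : 1 < s) : 0 < primeZeta s :=
  dirichletSum_pos ⟨2, Nat.prime_two, two_ne_zero⟩ hs

lemma continuousOn_primeZeta : ContinuousOn primeZeta (Set.Ioi 1) :=
  continuousOn_dirichletSum Nat.not_prime_zero

lemma tendsto_primeZeta_atTop : Tendsto primeZeta (𝓝[>] 1) atTop :=
  tendsto_dirichletSum_atTop Nat.not_prime_zero Nat.Primes.not_summable_one_div

lemma primeZeta_two_lt_one : primeZeta 2 < 1 := by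
  have hle : dirichletSum ({1} ∪ {p | p.Prime}) 2 ≤ π ^ 2 / 6 := by
    have hzeta : HasSum (fun n : ℕ => (n : ℝ) ^ (-2 : ℝ)) (π ^ 2 / 6) := by
      simpa [Real.rpow_neg] using hasSum_zeta_two
    rw [← hzeta.tsum_eq]
    exact hzeta.summable.tsum_subtype_le _ _ fun _ => by positivity
  have hdisj : Disjoint {1} {p : ℕ | p.Prime} :=
    Set.disjoint_singleton_left.2 Nat.not_prime_one
  rw [dirichletSum_union hdisj one_lt_two, dirichletSum_singleton, Nat.cast_one,
    Real.one_rpow, ← primeZeta_eq_dirichletSum] at hle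
  nlinarith [Real.pi_lt_d2, Real.pi_pos]

end PrimeZeta

section AlmostPrimes

variable {k m n p : ℕ}

lemma mem_almostPrimes_iff :
    n ∈ almostPrimes k ↔ n ≠ 0 ∧ ArithmeticFunction.cardFactors n = k := by
  simp [almostPrimes, ArithmeticFunction.cardFactors_apply, Nat.pos_iff_ne_zero]

lemma ne_zero_of_mem_almostPrimes (hn : n ∈ almostPrimes k) : n ≠ 0 := hn.1.ne'

lemma mul_mem_almostPrimes_iff (hp : p.Prime) :
    m * p ∈ almostPrimes (k + 1) ↔ m ∈ almostPrimes k := by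
  simp only [mem_almostPrimes_iff, mul_ne_zero_iff, and_iff_left hp.ne_zero]
  refine and_congr_right fun hm => ?_
  rw [ArithmeticFunction.cardFactors_mul hm hp.ne_zero,
    ArithmeticFunction.cardFactors_apply_prime hp, Nat.add_right_cancel_iff]

lemma almostPrimes_zero : almostPrimes 0 = {1} := by
  ext n
  rw [mem_almostPrimes_iff, ArithmeticFunction.cardFactors_eq_zero_iff_eq_zero_or_one,
    Set.mem_singleton_iff]
  lia

lemma two_pow_mem_almostPrimes (k : ℕ) : 2 ^ k ∈ almostPrimes k := by
  simp [mem_almostPrimes_iff, ArithmeticFunction.cardFactors_apply_prime_pow Nat.prime_two]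

lemma one_lt_of_mem_almostPrimes (hk : k ≠ 0) (hn : n ∈ almostPrimes k) : 1 < n := by
  rw [mem_almostPrimes_iff] at hn
  refine Nat.one_lt_iff_ne_zero_and_ne_one.2 ⟨hn.1, ?_⟩
  rintro rfl
  exact hk (by simpa using hn.2.symm)

lemma primeFactors_nonempty_of_mem_almostPrimes (hk : k ≠ 0) (hn : n ∈ almostPrimes k) :
    n.primeFactors.Nonempty :=
  Nat.nonempty_primeFactors.2 (one_lt_of_mem_almostPrimes hk hn)

lemma card_primeFactors_le_of_mem_almostPrimes (hn : n ∈ almostPrimes k) :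
    n.primeFactors.card ≤ k :=
  (List.toFinset_card_le _).trans_eq hn.2

/-- The primes that are at least as large as every prime factor of `m`, i.e. those that become the
largest prime factor of `m * p`. They index the ways to append a last factor to `m` when
almost primes are written as nondecreasing products of primes. -/
def dominatingPrimes (m : ℕ) : Set ℕ := {p | p.Prime ∧ ∀ q ∈ m.primeFactors, q ≤ p}

lemma exists_mem_dominatingPrimes (m : ℕ) : ∃ p, p ∈ dominatingPrimes m := by
  obtain ⟨p, hmp, hp⟩ := Nat.exists_infinite_primes m
  exact ⟨p, hp, fun q hq => (Nat.le_of_mem_primeFactors hq).trans hmp⟩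

lemma isGreatest_primeFactors_mul (hm : m ≠ 0) (hp : p ∈ dominatingPrimes m) :
    IsGreatest ((m * p).primeFactors : Set ℕ) p := by
  rw [Nat.primeFactors_mul hm hp.1.ne_zero, hp.1.primeFactors]
  refine ⟨by simp, fun q hq => ?_⟩
  rcases Finset.mem_union.1 hq with hq | hq
  · exact hp.2 q hq
  · exact (Finset.mem_singleton.1 hq).le

lemma bijective_mul_dominatingPrimes (k : ℕ) :
    Function.Bijective fun x : Σ m : almostPrimes k, dominatingPrimes m.1 =>
      (⟨x.1.1 * x.2.1, (mul_mem_almostPrimes_iff x.2.2.1).2 x.1.2⟩ : almostPrimes (k + 1)) := by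
  constructor
  · rintro ⟨⟨m, hm⟩, ⟨p, hp⟩⟩ ⟨⟨m', hm'⟩, ⟨p', hp'⟩⟩ heq
    have hmul : m * p = m' * p' := congrArg Subtype.val heq
    have hgreatest := isGreatest_primeFactors_mul (ne_zero_of_mem_almostPrimes hm) hp
    rw [hmul] at hgreatest
    obtain rfl : p = p' := hgreatest.unique
      (isGreatest_primeFactors_mul (ne_zero_of_mem_almostPrimes hm') hp')
    obtain rfl : m = m' := Nat.eq_of_mul_eq_mul_right hp.1.pos hmul
    rfl
  · rintro ⟨n, hn⟩
    obtain ⟨p, hp_mem, hp_max⟩ : ∃ p, IsGreatest (n.primeFactors : Set ℕ) p :=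
      ⟨_, n.primeFactors.isGreatest_max'
        (primeFactors_nonempty_of_mem_almostPrimes k.succ_ne_zero hn)⟩
    have hp : p.Prime := Nat.prime_of_mem_primeFactors hp_mem
    obtain ⟨m, rfl⟩ := Nat.dvd_of_mem_primeFactors hp_mem
    rw [mul_comm, mul_mem_almostPrimes_iff hp] at hn
    have hdom : p ∈ dominatingPrimes m := ⟨hp, fun q hq =>
      hp_max (Nat.primeFactors_mono (dvd_mul_left m p)
        (mul_ne_zero hp.ne_zero (ne_zero_of_mem_almostPrimes hn)) hq)⟩
    exact ⟨⟨⟨m, hn⟩, ⟨p, hdom⟩⟩, Subtype.ext (mul_comm m p)⟩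

lemma bijective_mul_prime (k : ℕ) :
    Function.Bijective fun x : almostPrimes k × {p : ℕ | p.Prime} =>
      (⟨⟨x.1.1 * x.2.1, (mul_mem_almostPrimes_iff x.2.2).2 x.1.2⟩, ⟨x.2.1,
        Nat.mem_primeFactors.2 ⟨x.2.2, dvd_mul_left _ _,
          mul_ne_zero (ne_zero_of_mem_almostPrimes x.1.2) x.2.2.ne_zero⟩⟩⟩ :
        Σ n : almostPrimes (k + 1), n.1.primeFactors) := by
  constructor
  · rintro ⟨⟨m, hm⟩, ⟨p, hp⟩⟩ ⟨⟨m', hm'⟩, ⟨p', hp'⟩⟩ heq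
    have hmul : m * p = m' * p' := congrArg (fun y => y.1.1) heq
    obtain rfl : p = p' := congrArg (fun y => y.2.1) heq
    obtain rfl : m = m' := Nat.eq_of_mul_eq_mul_right hp.pos hmul
    rfl
  · rintro ⟨⟨n, hn⟩, ⟨p, hpn⟩⟩
    have hp : p.Prime := Nat.prime_of_mem_primeFactors hpn
    obtain ⟨m, rfl⟩ := exists_eq_mul_left_of_dvd (Nat.dvd_of_mem_primeFactors hpn)
    exact ⟨⟨⟨m, (mul_mem_almostPrimes_iff hp).1 hn⟩, ⟨p, hp⟩⟩, rfl⟩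

end AlmostPrimes

section Pk

variable {k : ℕ} {s : ℝ}

lemma Pk_eq_dirichletSum (k : ℕ) : Pk k = dirichletSum (almostPrimes k) := rfl

lemma Pk_zero (s : ℝ) : Pk 0 s = 1 := by
  rw [Pk_eq_dirichletSum, almostPrimes_zero, dirichletSum_singleton, Nat.cast_one, Real.one_rpow]

lemma continuousOn_Pk (k : ℕ) : ContinuousOn (Pk k) (Set.Ioi 1) :=
  continuousOn_dirichletSum fun h => ne_zero_of_mem_almostPrimes h rfl

lemma hasSum_Pk_succ (k : ℕ) (hs : 1 < s) :
    HasSum (fun m : almostPrimes k => (m.1 : ℝ) ^ (-s) * dirichletSum (dominatingPrimes m.1) s)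
      (Pk (k + 1) s) := by
  have hsum := (Equiv.ofBijective _ (bijective_mul_dominatingPrimes k)).hasSum_iff.2
    (hasSum_dirichletSum (almostPrimes (k + 1)) hs)
  refine hsum.sigma fun m => ?_
  simpa [Function.comp_def, Real.mul_rpow] using
    (hasSum_dirichletSum (dominatingPrimes m.1) hs).mul_left ((m.1 : ℝ) ^ (-s))

lemma hasSum_card_primeFactors_mul (k : ℕ) (hs : 1 < s) :
    HasSum (fun n : almostPrimes (k + 1) => (n.1.primeFactors.card : ℝ) * (n.1 : ℝ) ^ (-s))
      (Pk k s * primeZeta s) := by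
  have hsum : HasSum
      (fun y : Σ n : almostPrimes (k + 1), n.1.primeFactors => (y.1.1 : ℝ) ^ (-s))
      (Pk k s * primeZeta s) := by
    rw [← (Equiv.ofBijective _ (bijective_mul_prime k)).hasSum_iff]
    simpa [Function.comp_def, Real.mul_rpow, Pk_eq_dirichletSum, primeZeta_eq_dirichletSum] using
      hasSum_dirichletSum_mul (almostPrimes k) {p | p.Prime} hs hs
  refine hsum.sigma fun n => ?_
  simpa using hasSum_fintype fun _ : n.1.primeFactors => (n.1 : ℝ) ^ (-s)

lemma Pk_succ_le (k : ℕ) (hs : 1 < s) : Pk (k + 1) s ≤ Pk k s * primeZeta s := by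
  refine hasSum_le (fun n => ?_) (hasSum_dirichletSum _ hs) (hasSum_card_primeFactors_mul k hs)
  have hcard : 1 ≤ n.1.primeFactors.card :=
    (primeFactors_nonempty_of_mem_almostPrimes k.succ_ne_zero n.2).card_pos
  exact le_mul_of_one_le_left (by positivity) (mod_cast hcard)

lemma Pk_mul_primeZeta_le (k : ℕ) (hs : 1 < s) :
    Pk k s * primeZeta s ≤ (k + 1 : ℕ) * Pk (k + 1) s := by
  refine hasSum_le (fun n => ?_) (hasSum_card_primeFactors_mul k hs)
    ((hasSum_dirichletSum _ hs).mul_left _)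
  gcongr
  exact card_primeFactors_le_of_mem_almostPrimes n.2

lemma Pk_le_primeZeta_pow (k : ℕ) (hs : 1 < s) : Pk k s ≤ primeZeta s ^ k := by
  induction k with
  | zero => exact (Pk_zero s).le
  | succ k ih =>
    rw [pow_succ]
    exact (Pk_succ_le k hs).trans (mul_le_mul_of_nonneg_right ih (primeZeta_pos hs).le)

lemma primeZeta_pow_le_factorial_mul_Pk (k : ℕ) (hs : 1 < s) :
    primeZeta s ^ k ≤ k.factorial * Pk k s := by
  induction k with
  | zero => simp [Pk_zero]
  | succ k ih =>
    calc primeZeta s ^ (k + 1) = primeZeta s ^ k * primeZeta s := pow_succ _ _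
      _ ≤ k.factorial * Pk k s * primeZeta s :=
        mul_le_mul_of_nonneg_right ih (primeZeta_pos hs).le
      _ = k.factorial * (Pk k s * primeZeta s) := mul_assoc _ _ _
      _ ≤ k.factorial * ((k + 1 : ℕ) * Pk (k + 1) s) :=
        mul_le_mul_of_nonneg_left (Pk_mul_primeZeta_le k hs) (by positivity)
      _ = (k + 1).factorial * Pk (k + 1) s := by
        rw [Nat.factorial_succ]
        push_cast
        ring

lemma Pk_two_le_primeZeta_two (hk : k ≠ 0) : Pk k 2 ≤ primeZeta 2 :=
  (Pk_le_primeZeta_pow k one_lt_two).trans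
    (pow_le_of_le_one (primeZeta_pos one_lt_two).le primeZeta_two_lt_one.le hk)

lemma primeZeta_le_Pk (hk : 2 ≤ k) (hs : 1 < s) (hlarge : k.factorial ≤ primeZeta s) :
    primeZeta s ≤ Pk k s := by
  have hfac : (1 : ℝ) ≤ k.factorial := mod_cast k.factorial_pos
  refine le_of_mul_le_mul_left ?_ (zero_lt_one.trans_le hfac)
  calc k.factorial * primeZeta s ≤ primeZeta s * primeZeta s :=
        mul_le_mul_of_nonneg_right hlarge (primeZeta_pos hs).le
    _ = primeZeta s ^ 2 := (sq _).symm
    _ ≤ primeZeta s ^ k := pow_le_pow_right₀ (hfac.trans hlarge) hk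
    _ ≤ k.factorial * Pk k s := primeZeta_pow_le_factorial_mul_Pk k hs

lemma exists_Pk_eq_primeZeta (hk : 2 ≤ k) : ∃ σ : ℝ, 1 < σ ∧ Pk k σ = primeZeta σ := by
  obtain ⟨a, hlarge, ha⟩ := ((tendsto_primeZeta_atTop.eventually_ge_atTop
    (k.factorial : ℝ)).and self_mem_nhdsWithin).exists
  exact isPreconnected_Ioi.intermediate_value₂ (Set.mem_Ioi.2 one_lt_two) ha
    (continuousOn_Pk k) continuousOn_primeZeta (Pk_two_le_primeZeta_two (by lia))
    (primeZeta_le_Pk hk ha hlarge)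

lemma antitoneOn_dominatingPrimes_div_primeZeta (m : ℕ) :
    AntitoneOn (fun s => dirichletSum (dominatingPrimes m) s / primeZeta s) (Set.Ioi 1) := by
  refine antitoneOn_dirichletSum_div (fun _ hp => hp.1) Nat.not_prime_zero ?_
  rintro p hp q ⟨hq, hq_not⟩
  by_contra! hpq
  exact hq_not ⟨hq, fun r hr => (hp.2 r hr).trans hpq.le⟩

lemma strictAntiOn_Pk_div_primeZeta (hk : 2 ≤ k) :
    StrictAntiOn (fun s => Pk k s / primeZeta s) (Set.Ioi 1) := by
  obtain ⟨j, rfl⟩ : ∃ j, k = j + 1 := ⟨k - 1, by lia⟩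
  have hj : j ≠ 0 := by lia
  have hratio {u : ℝ} (hu : 1 < u) := (hasSum_Pk_succ j hu).div_const (primeZeta u)
  intro s hs t ht hst
  have hterm (m : almostPrimes j) :
      (m.1 : ℝ) ^ (-t) * dirichletSum (dominatingPrimes m.1) t / primeZeta t <
        (m.1 : ℝ) ^ (-s) * dirichletSum (dominatingPrimes m.1) s / primeZeta s := by
    obtain ⟨p, hp⟩ := exists_mem_dominatingPrimes m.1
    have hm : (1 : ℝ) < m.1 := mod_cast one_lt_of_mem_almostPrimes hj m.2
    rw [mul_div_assoc, mul_div_assoc]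
    exact mul_lt_mul (Real.rpow_lt_rpow_of_exponent_lt hm (neg_lt_neg hst))
      (antitoneOn_dominatingPrimes_div_primeZeta m.1 hs ht hst.le)
      (div_pos (dirichletSum_pos ⟨p, hp, hp.1.ne_zero⟩ ht) (primeZeta_pos ht))
      (by positivity)
  exact hasSum_lt (fun m => (hterm m).le) (hterm ⟨2 ^ j, two_pow_mem_almostPrimes j⟩)
    (hratio ht) (hratio hs)

end Pk

theorem stmt_8_general (k : ℕ) (hk : 2 ≤ k) :
    (∃! σ : ℝ, 1 < σ ∧ Pk k σ = primeZeta σ) ∧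
    (∀ σ : ℝ, 1 < σ → Pk k σ = primeZeta σ →
      (∀ s : ℝ, 1 < s → s < σ → primeZeta s < Pk k s) ∧
      (∀ s : ℝ, σ < s → Pk k s < primeZeta s)) := by
  have hanti := strictAntiOn_Pk_div_primeZeta hk
  have hratio {σ : ℝ} (hσ : 1 < σ) (heq : Pk k σ = primeZeta σ) : Pk k σ / primeZeta σ = 1 :=
    (div_eq_one_iff_eq (primeZeta_pos hσ).ne').2 heq
  refine ⟨?_, fun σ hσ heq => ⟨fun s hs hsσ => ?_, fun s hσs => ?_⟩⟩
  · obtain ⟨σ, hσ, heq⟩ := exists_Pk_eq_primeZeta hk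
    exact ⟨σ, ⟨hσ, heq⟩, fun τ ⟨hτ, hτeq⟩ =>
      hanti.injOn hτ hσ ((hratio hτ hτeq).trans (hratio hσ heq).symm)⟩
  · rw [← one_lt_div (primeZeta_pos hs), ← hratio hσ heq]
    exact hanti hs hσ hsσ
  · rw [← div_lt_one (primeZeta_pos (hσ.trans hσs)), ← hratio hσ heq]
    exact hanti hσ (hσ.trans hσs) hσs

/-- For `2 ≤ k ≤ 20` there is a unique real `σ > 1` with `P_k(σ) = P(σ)`;
moreover `P_k > P` on `(1, σ)` and `P_k < P` on `(σ, ∞)`. -/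
theorem stmt_8 (k : ℕ) (hk2 : 2 ≤ k) (hk20 : k ≤ 20) :
    (∃! σ : ℝ, 1 < σ ∧ Pk k σ = primeZeta σ) ∧
    (∀ σ : ℝ, 1 < σ → Pk k σ = primeZeta σ →
      (∀ s : ℝ, 1 < s → s < σ → primeZeta s < Pk k s) ∧
      (∀ s : ℝ, σ < s → Pk k s < primeZeta s)) :=
  stmt_8_general k hk2
end

section
/- For every integer k with 2 ≤ k ≤ 20, there exists a unique real h_k > 0 such that f(N_k, h_k) = f(N₁, h_k); moreover f(N_k, h) < f(N₁, h) for all real h with 0 ≤ h < h_k, and f(N_k, h) > f(N₁, h) for all real h > h_k. -/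
open MeasureTheory Real

/-!
Write `P_k(s) = ∑ n ^ (-s)` over the `k`-almost primes. At `h = 0` we have
`f(N_k, 0) = ∫ P_k(1 + t) dt` over `t > 0`. The Euler product bounds `P_1(1 + t)`, Newton's
identities turn this into bounds for `P_k`, and the resulting majorant has an explicit
antiderivative near `t = 0`; hence `f(N_k, 0) ≤ 1.36 < f(N_1, 0)` for all `k ≥ 2`. For large `h`
the inequality is reversed: `f(N_{k+1}, h)` is at least a constant times `f(N_k, h) ∑ 1/p` over the
primes with `log p ≤ h`, and `∑ 1/p` diverges. Finally `h ↦ f(N_k, h) / f(N_1, h)` is strictly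
increasing: in the double series for `f(N_k, h') f(N_1, h) - f(N_k, h) f(N_1, h')` pair the term of
`(n, p)` with the one obtained by exchanging `p` and the largest prime factor of `n`; each pair has
a positive sum.
-/

/-! ### Upper bounds for the prime zeta function -/

lemma rpow_neg_tangent_le {a x s : ℝ} (ha : 0 < a) (hx : 0 < x) (hs : 0 ≤ s) :
    a ^ (-s) * (1 - s * (x / a - 1)) ≤ x ^ (-s) := by
  have hlog : log (x / a) ≤ x / a - 1 := log_le_sub_one_of_pos (div_pos hx ha)
  calc a ^ (-s) * (1 - s * (x / a - 1)) ≤ a ^ (-s) * (x / a) ^ (-s) := by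
        gcongr
        rw [rpow_def_of_pos (div_pos hx ha)]
        nlinarith [add_one_le_exp (log (x / a) * -s), mul_le_mul_of_nonneg_left hlog hs]
    _ = x ^ (-s) := by rw [← mul_rpow ha.le (div_pos hx ha).le, mul_div_cancel₀ x ha.ne']

lemma rpow_neg_le_integral {n s : ℝ} (hn : 1 ≤ n) (hs : 0 ≤ s) :
    n ^ (-s) ≤ ∫ x in (n - 1 / 2)..(n + 1 / 2), x ^ (-s) := by
  have h0 : (0 : ℝ) ∉ Set.uIcc (n - 1 / 2) (n + 1 / 2) :=
    Set.notMem_uIcc_of_lt (by linarith) (by linarith)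
  calc n ^ (-s) = ∫ x in (n - 1 / 2)..(n + 1 / 2), n ^ (-s) * (1 - s * (x / n - 1)) := by
        simp only [intervalIntegral.integral_const_mul]
        rw [intervalIntegral.integral_sub (by simp)
          (Continuous.intervalIntegrable (by fun_prop) _ _), intervalIntegral.integral_const_mul,
          intervalIntegral.integral_sub (Continuous.intervalIntegrable (by fun_prop) _ _)
          (by simp), intervalIntegral.integral_div, integral_id]
        simp only [intervalIntegral.integral_const, smul_eq_mul]
        field_simp
        ring
    _ ≤ _ := intervalIntegral.integral_mono_on (by linarith)
        (Continuous.intervalIntegrable (by fun_prop) _ _)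
        (intervalIntegral.intervalIntegrable_rpow (Or.inr h0))
        fun x hx ↦ rpow_neg_tangent_le (by linarith) (by linarith [hx.1]) hs

lemma sum_rpow_neg_le_integral {s : ℝ} (hs : 0 ≤ s) (N : ℕ) :
    ∑ n ∈ Finset.range N, (n + 2 : ℝ) ^ (-s) ≤ ∫ x in (3 / 2)..(N + 3 / 2), x ^ (-s) := by
  have hint (i : ℕ) : IntervalIntegrable (fun x : ℝ ↦ x ^ (-s)) volume (i + 3 / 2)
      ((i + 1 : ℕ) + 3 / 2) := by
    refine intervalIntegral.intervalIntegrable_rpow (Or.inr (Set.notMem_uIcc_of_lt ?_ ?_)) <;>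
      positivity
  have hsum := intervalIntegral.sum_integral_adjacent_intervals (n := N)
    (a := fun i : ℕ ↦ (i + 3 / 2 : ℝ)) fun i _ ↦ hint i
  simp only [Nat.cast_zero, zero_add] at hsum
  rw [← hsum]
  refine Finset.sum_le_sum fun i _ ↦ ?_
  have hle := rpow_neg_le_integral (n := i + 2) (by linarith [i.cast_nonneg (α := ℝ)]) hs
  rwa [show (i + 2 - 1 / 2 : ℝ) = i + 3 / 2 by ring,
    show (i + 2 + 1 / 2 : ℝ) = (i + 1 : ℕ) + 3 / 2 by push_cast; ring] at hle

lemma three_halves_rpow_neg_le {t : ℝ} (ht : 0 ≤ t) (ht1 : t ≤ 1) :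
    (3 / 2 : ℝ) ^ (-t) ≤ 1 - t / 3 := by
  have hbernoulli := rpow_one_add_le_one_add_mul_self (s := (-1 / 3 : ℝ)) (by norm_num) ht ht1
  rw [rpow_neg (by norm_num), ← inv_rpow (by norm_num)]
  norm_num at hbernoulli ⊢
  linarith

lemma sum_range_rpow_neg_le {t : ℝ} (ht : 0 < t) (ht1 : t ≤ 1) (N : ℕ) :
    ∑ n ∈ Finset.range N, (n : ℝ) ^ (-(1 + t)) ≤ 1 / t + 2 / 3 := by
  have htail : ∑ n ∈ Finset.range N, (n + 2 : ℝ) ^ (-(1 + t)) ≤ 1 / t - 1 / 3 := by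
    have h0 : (0 : ℝ) ∉ Set.uIcc (3 / 2 : ℝ) (N + 3 / 2) :=
      Set.notMem_uIcc_of_lt (by positivity) (by positivity)
    calc _ ≤ ∫ x in (3 / 2)..(N + 3 / 2 : ℝ), x ^ (-(1 + t)) :=
          sum_rpow_neg_le_integral (by linarith) N
      _ = ((3 / 2 : ℝ) ^ (-t) - (N + 3 / 2 : ℝ) ^ (-t)) / t := by
          rw [integral_rpow (Or.inr ⟨by linarith, h0⟩), show -(1 + t) + 1 = -t by ring,
            div_neg, ← neg_div, neg_sub]
      _ ≤ (1 - t / 3) / t := by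
          have hpow := three_halves_rpow_neg_le ht.le ht1
          have hpos : 0 < (N + 3 / 2 : ℝ) ^ (-t) := by positivity
          gcongr ?_ / t
          linarith
      _ = 1 / t - 1 / 3 := by field_simp
  calc _ ≤ ∑ n ∈ Finset.range (N + 2), (n : ℝ) ^ (-(1 + t)) :=
        Finset.sum_le_sum_of_subset_of_nonneg (Finset.range_mono (by lia))
          fun _ _ _ ↦ by positivity
    _ = ∑ n ∈ Finset.range N, (n + 2 : ℝ) ^ (-(1 + t)) + 1 := by
        have h0 : (0 : ℝ) ^ (-(1 + t)) = 0 := zero_rpow (by linarith)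
        simp only [Finset.sum_range_succ', Nat.cast_add, Nat.cast_one, Nat.cast_zero, h0, zero_add,
          one_rpow, add_zero, add_assoc, one_add_one_eq_two]
    _ ≤ _ := by linarith

lemma rpow_neg_lt_one {p s : ℝ} (hp : 1 < p) (hs : 0 < s) : p ^ (-s) < 1 :=
  rpow_lt_one_of_one_lt_of_neg hp (by linarith)

/-- The completely multiplicative function `n ↦ n ^ (-s)`, as required by the Euler product. -/
noncomputable def rpowNegHom (s : ℝ) : ℕ →* ℝ where
  toFun n := (n : ℝ) ^ (-s)
  map_one' := by simp
  map_mul' m n := by rw [Nat.cast_mul, mul_rpow (by positivity) (by positivity)]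

lemma sum_neg_log_one_sub_rpow_le {t : ℝ} (ht : 0 < t) (ht1 : t ≤ 1) {T : Finset ℕ}
    (hT : ∀ p ∈ T, p.Prime) :
    ∑ p ∈ T, -log (1 - (p : ℝ) ^ (-(1 + t))) ≤ log (1 / t + 2 / 3) := by
  have hsum : Summable (rpowNegHom (1 + t)) := by
    simpa only [rpowNegHom, MonoidHom.coe_mk, OneHom.coe_mk, rpow_neg (Nat.cast_nonneg _)] using
      summable_nat_rpow_inv.mpr (by linarith : 1 < 1 + t)
  have hpos (p) (hp : p ∈ T) : 0 < 1 - (p : ℝ) ^ (-(1 + t)) :=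
    sub_pos.mpr (rpow_neg_lt_one (by exact_mod_cast (hT p hp).one_lt) (by linarith))
  have hprod : ∏ p ∈ T, (1 - (p : ℝ) ^ (-(1 + t)))⁻¹ ≤ 1 / t + 2 / 3 := by
    have heuler := EulerProduct.prod_filter_prime_geometric_eq_tsum_factoredNumbers hsum T
    rw [Finset.filter_true_of_mem hT] at heuler
    calc _ = ∑' m : Nat.factoredNumbers T, rpowNegHom (1 + t) m := heuler
      _ ≤ ∑' m, rpowNegHom (1 + t) m :=
          Summable.tsum_subtype_le _ _ (fun n ↦ rpow_nonneg n.cast_nonneg _) hsum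
      _ ≤ _ := Real.tsum_le_of_sum_range_le (fun n ↦ rpow_nonneg n.cast_nonneg _)
          (sum_range_rpow_neg_le ht ht1)
  calc _ = log (∏ p ∈ T, (1 - (p : ℝ) ^ (-(1 + t)))⁻¹) := by
        rw [log_prod fun p hp ↦ (inv_pos.mpr (hpos p hp)).ne']
        simp only [log_inv]
    _ ≤ _ := log_le_log (Finset.prod_pos fun p hp ↦ inv_pos.mpr (hpos p hp)) hprod

lemma add_log_one_sub_antitone {x y : ℝ} (hy : 0 ≤ y) (hxy : y ≤ x) (hx : x < 1) :
    x + log (1 - x) ≤ y + log (1 - y) := by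
  have hlog := log_le_sub_one_of_pos (div_pos (by linarith : 0 < 1 - x) (by linarith : 0 < 1 - y))
  rw [log_div (by linarith) (by linarith)] at hlog
  have hquot : (1 - x) / (1 - y) - 1 ≤ y - x := by
    rw [div_sub_one (by linarith), div_le_iff₀ (by linarith)]
    nlinarith
  linarith

/-- An upper bound for the prime zeta value `P(1 + δ)`, obtained from `ζ(1 + δ) ≤ 1/δ + 2/3` and
the Euler product by using only the terms of `log ζ(1 + δ) - P(1 + δ)` with `p ∈ W`. -/
noncomputable def primeZetaBound (W : Finset ℕ) (δ : ℝ) : ℝ :=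
  log (1 / δ + 2 / 3) + ∑ p ∈ W, ((p : ℝ) ^ (-(1 + δ)) + log (1 - (p : ℝ) ^ (-(1 + δ))))

lemma sum_primes_rpow_le {t δ : ℝ} (ht : 0 < t) (htδ : t ≤ δ) (hδ : δ ≤ 1) {T W : Finset ℕ}
    (hT : ∀ p ∈ T, p.Prime) (hW : W ⊆ T) :
    ∑ p ∈ T, (p : ℝ) ^ (-(1 + t)) ≤ primeZetaBound W δ + log (δ / t) := by
  have hone {p : ℕ} (hp : p ∈ T) : (1 : ℝ) < p := by exact_mod_cast (hT p hp).one_lt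
  have hlt {p : ℕ} (hp : p ∈ T) : (p : ℝ) ^ (-(1 + t)) < 1 :=
    rpow_neg_lt_one (hone hp) (by linarith)
  have hzeta : log (1 / t + 2 / 3) ≤ log (1 / δ + 2 / 3) + log (δ / t) := by
    have hδ0 := ht.trans_le htδ
    rw [← log_mul (by positivity) (by positivity)]
    refine log_le_log (by positivity) ?_
    calc 1 / t + 2 / 3 ≤ 1 / t + 2 / 3 * (δ / t) := by
          linarith [(one_le_div ht).mpr htδ]
      _ = (1 / δ + 2 / 3) * (δ / t) := by field_simp
  calc ∑ p ∈ T, (p : ℝ) ^ (-(1 + t))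
      = ∑ p ∈ T, -log (1 - (p : ℝ) ^ (-(1 + t)))
        + ∑ p ∈ T, ((p : ℝ) ^ (-(1 + t)) + log (1 - (p : ℝ) ^ (-(1 + t)))) := by
        rw [← Finset.sum_add_distrib]
        exact Finset.sum_congr rfl fun p _ ↦ by ring
    _ ≤ log (1 / t + 2 / 3)
        + ∑ p ∈ W, ((p : ℝ) ^ (-(1 + t)) + log (1 - (p : ℝ) ^ (-(1 + t)))) := by
        refine add_le_add (sum_neg_log_one_sub_rpow_le ht (htδ.trans hδ) hT)
          (Finset.sum_le_sum_of_subset_of_nonpos' hW fun p hp _ ↦ ?_)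
        simpa using add_log_one_sub_antitone le_rfl (by positivity) (hlt hp)
    _ ≤ log (1 / t + 2 / 3)
        + ∑ p ∈ W, ((p : ℝ) ^ (-(1 + δ)) + log (1 - (p : ℝ) ^ (-(1 + δ)))) := by
        refine add_le_add_right (Finset.sum_le_sum fun p hp ↦ ?_) _
        exact add_log_one_sub_antitone (by positivity)
          (rpow_le_rpow_of_exponent_le (hone (hW hp)).le (by linarith)) (hlt (hW hp))
    _ ≤ primeZetaBound W δ + log (δ / t) := by
        rw [primeZetaBound]
        linarith

lemma primeZetaBound_le {W : Finset ℕ} (hW : ∀ p ∈ W, 1 < p) {δ U : ℝ} (hδ : 0 < δ) {y : ℕ → ℝ}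
    (hy : ∀ p ∈ W, 0 ≤ y p ∧ y p ≤ (p : ℝ) ^ (-(1 + δ)))
    (hU : (1 / δ + 2 / 3) * ∏ p ∈ W, (1 - y p) ≤ exp (U - ∑ p ∈ W, y p)) :
    primeZetaBound W δ ≤ U := by
  have hlt (p) (hp : p ∈ W) : (p : ℝ) ^ (-(1 + δ)) < 1 :=
    rpow_neg_lt_one (by exact_mod_cast hW p hp) (by linarith)
  have hpos (p) (hp : p ∈ W) : 0 < 1 - y p := sub_pos.mpr ((hy p hp).2.trans_lt (hlt p hp))
  have hprod : 0 < ∏ p ∈ W, (1 - y p) := Finset.prod_pos hpos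
  calc primeZetaBound W δ ≤ log (1 / δ + 2 / 3) + ∑ p ∈ W, (y p + log (1 - y p)) := by
        exact add_le_add_right (Finset.sum_le_sum fun p hp ↦
          add_log_one_sub_antitone (hy p hp).1 (hy p hp).2 (hlt p hp)) _
    _ = log ((1 / δ + 2 / 3) * ∏ p ∈ W, (1 - y p)) + ∑ p ∈ W, y p := by
        rw [log_mul (by positivity) hprod.ne', log_prod fun p hp ↦ (hpos p hp).ne',
          Finset.sum_add_distrib]
        ring
    _ ≤ log (exp (U - ∑ p ∈ W, y p)) + ∑ p ∈ W, y p := by gcongr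
    _ = U := by rw [log_exp, sub_add_cancel]

lemma sum_range_inv_odd_sq_le (N : ℕ) :
    ∑ n ∈ Finset.range N, ((2 * n + 3 : ℝ) ^ 2)⁻¹ ≤ 1 / 4 - 1 / (4 * (N + 1)) := by
  induction N with
  | zero => norm_num
  | succ N ih =>
    have hterm : ((2 * N + 3 : ℝ) ^ 2)⁻¹ ≤ 1 / (4 * (N + 1)) - 1 / (4 * (N + 1 + 1)) := by
      rw [div_sub_div _ _ (by positivity) (by positivity), inv_eq_one_div,
        div_le_div_iff₀ (by positivity) (by positivity)]
      nlinarith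
    rw [Finset.sum_range_succ]
    push_cast
    linarith

lemma sum_inv_odd_sq_le {T : Finset ℕ} (hT : ∀ n ∈ T, Odd n ∧ 1 < n) :
    ∑ n ∈ T, ((n : ℝ) ^ 2)⁻¹ ≤ 1 / 4 := by
  obtain ⟨N, hN⟩ := T.exists_nat_subset_range
  have hsub : T ⊆ (Finset.range N).image (2 * · + 3) := fun n hn ↦ by
    obtain ⟨⟨m, rfl⟩, hm⟩ := hT n hn
    have hlt := Finset.mem_range.mp (hN hn)
    exact Finset.mem_image.mpr ⟨m - 1, Finset.mem_range.mpr (by lia), by lia⟩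
  calc ∑ n ∈ T, ((n : ℝ) ^ 2)⁻¹
      ≤ ∑ n ∈ ((Finset.range N).image (2 * · + 3) : Finset ℕ), ((n : ℝ) ^ 2)⁻¹ :=
        Finset.sum_le_sum_of_subset_of_nonneg hsub fun _ _ _ ↦ by positivity
    _ = ∑ n ∈ Finset.range N, ((2 * n + 3 : ℝ) ^ 2)⁻¹ := by
        rw [Finset.sum_image (by intro a _ b _ h; dsimp only at h; lia)]
        push_cast
        rfl
    _ ≤ 1 / 4 - 1 / (4 * (N + 1)) := sum_range_inv_odd_sq_le N
    _ ≤ 1 / 4 := sub_le_self _ (by positivity)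

lemma rpow_neg_le_mul_inv_sq {a x σ : ℝ} (ha : 0 < a) (hax : a ≤ x) (hσ : 2 ≤ σ) :
    x ^ (-σ) ≤ a ^ 2 * a ^ (-σ) * (x ^ 2)⁻¹ := by
  have hx : 0 < x := ha.trans_le hax
  have hpow : (x / a) ^ (-σ) ≤ (x / a) ^ (-2 : ℝ) :=
    rpow_le_rpow_of_exponent_le ((one_le_div ha).mpr hax) (by linarith)
  calc x ^ (-σ) = a ^ (-σ) * (x / a) ^ (-σ) := by
        rw [← mul_rpow ha.le (by positivity), mul_div_cancel₀ x ha.ne']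
    _ ≤ a ^ (-σ) * (x / a) ^ (-2 : ℝ) := by gcongr
    _ = a ^ 2 * a ^ (-σ) * (x ^ 2)⁻¹ := by
        rw [rpow_neg (x := x / a) (by positivity), rpow_two, div_pow, inv_div]
        ring

lemma sum_primes_rpow_le_of_two_le {σ : ℝ} (hσ : 2 ≤ σ) {T : Finset ℕ}
    (hT : ∀ p ∈ T, p.Prime) :
    ∑ p ∈ T, (p : ℝ) ^ (-σ) ≤ 2 ^ (-σ) + 9 / 4 * 3 ^ (-σ) := by
  have hodd (p) (hp : p ∈ T.erase 2) : Odd p ∧ 1 < p :=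
    have hp := Finset.mem_erase.mp hp
    ⟨(hT p hp.2).odd_of_ne_two hp.1, (hT p hp.2).one_lt⟩
  calc ∑ p ∈ T, (p : ℝ) ^ (-σ) ≤ ∑ p ∈ insert 2 (T.erase 2), (p : ℝ) ^ (-σ) :=
        Finset.sum_le_sum_of_subset_of_nonneg (T.insert_erase_subset 2)
          fun _ _ _ ↦ by positivity
    _ = 2 ^ (-σ) + ∑ p ∈ T.erase 2, (p : ℝ) ^ (-σ) := by
        rw [Finset.sum_insert (T.notMem_erase 2), Nat.cast_ofNat]
    _ ≤ 2 ^ (-σ) + ∑ p ∈ T.erase 2, 3 ^ 2 * 3 ^ (-σ) * ((p : ℝ) ^ 2)⁻¹ := by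
        gcongr with p hp
        obtain ⟨⟨m, rfl⟩, hm⟩ := hodd p hp
        exact rpow_neg_le_mul_inv_sq (by norm_num) (by exact_mod_cast (by lia)) hσ
    _ ≤ 2 ^ (-σ) + 9 / 4 * 3 ^ (-σ) := by
        have hpos : (0 : ℝ) < 3 ^ (-σ) := by positivity
        rw [← Finset.mul_sum]
        nlinarith [sum_inv_odd_sq_le hodd]

/-! ### Newton's inequality for almost primes -/

lemma mem_almostPrimes {k n : ℕ} : n ∈ almostPrimes k ↔ Nat.IsAlmostPrime k n := by
  rw [Nat.IsAlmostPrime, ArithmeticFunction.cardFactors_apply, ← Nat.pos_iff_ne_zero]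
  rfl

lemma isAlmostPrime_of_mul {j k d n : ℕ} (hd : Nat.IsAlmostPrime j d)
    (hdn : Nat.IsAlmostPrime (j + k) (d * n)) : Nat.IsAlmostPrime k n := by
  have hn : n ≠ 0 := right_ne_zero_of_mul hdn.1
  have hΩ := hdn.2
  rw [ArithmeticFunction.cardFactors_mul hd.1 hn, hd.2] at hΩ
  exact ⟨hn, Nat.add_left_cancel hΩ⟩

lemma isAlmostPrime_prime_pow {p : ℕ} (hp : p.Prime) (k : ℕ) : Nat.IsAlmostPrime k (p ^ k) :=
  ⟨pow_ne_zero k hp.ne_zero, ArithmeticFunction.cardFactors_apply_prime_pow hp⟩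

lemma two_pow_le_of_isAlmostPrime {k n : ℕ} (hn : Nat.IsAlmostPrime k n) : 2 ^ k ≤ n := by
  calc 2 ^ k = 2 ^ n.primeFactorsList.length := by
        rw [← hn.2, ArithmeticFunction.cardFactors_apply]
    _ ≤ n.primeFactorsList.prod :=
        List.pow_card_le_prod _ 2 fun p hp ↦ (Nat.prime_of_mem_primeFactorsList hp).two_le
    _ = n := Nat.prod_primeFactorsList hn.1

lemma one_lt_of_isAlmostPrime {k n : ℕ} (hk : k ≠ 0) (hn : Nat.IsAlmostPrime k n) : 1 < n :=
  (Nat.one_lt_two_pow hk).trans_le (two_pow_le_of_isAlmostPrime hn)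

/-- The elements of `almostPrimes k` less than `N`, as a finite set. -/
def almostPrimesBelow (k N : ℕ) : Finset ℕ :=
  {n ∈ Finset.range N | 0 < n ∧ n.primeFactorsList.length = k}

lemma mem_almostPrimesBelow {k N n : ℕ} :
    n ∈ almostPrimesBelow k N ↔ n < N ∧ Nat.IsAlmostPrime k n := by
  rw [almostPrimesBelow, Finset.mem_filter, Finset.mem_range, ← mem_almostPrimes]
  rfl

lemma almostPrimesBelow_zero_subset (N : ℕ) : almostPrimesBelow 0 N ⊆ {1} := fun _ hn ↦
  Finset.mem_singleton.mpr (Nat.isAlmostPrime_zero_iff.mp (mem_almostPrimesBelow.mp hn).2)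

section NewtonInequality

variable {f : ℕ →* ℝ}

lemma sum_almostPrimesBelow_filter_dvd_le (hf : ∀ n, 0 ≤ f n) {d j : ℕ} (hd : Nat.IsAlmostPrime j d)
    (k N : ℕ) :
    ∑ n ∈ almostPrimesBelow (j + k) N with d ∣ n, f n ≤
      f d * ∑ m ∈ almostPrimesBelow k N, f m := by
  have hd0 : 0 < d := Nat.pos_of_ne_zero hd.1
  have hsub : {n ∈ almostPrimesBelow (j + k) N | d ∣ n} ⊆
      (almostPrimesBelow k N).image (d * ·) := fun n hn ↦ by
    obtain ⟨hn, m, rfl⟩ := Finset.mem_filter.mp hn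
    obtain ⟨hlt, hmem⟩ := mem_almostPrimesBelow.mp hn
    exact Finset.mem_image_of_mem _ (mem_almostPrimesBelow.mpr
      ⟨(Nat.le_mul_of_pos_left m hd0).trans_lt hlt, isAlmostPrime_of_mul hd hmem⟩)
  calc _ ≤ ∑ n ∈ (almostPrimesBelow k N).image (d * ·), f n :=
        Finset.sum_le_sum_of_subset_of_nonneg hsub fun n _ _ ↦ hf n
    _ = f d * ∑ m ∈ almostPrimesBelow k N, f m := by
        rw [Finset.sum_image fun a _ b _ h ↦ Nat.eq_of_mul_eq_mul_left hd0 h, Finset.mul_sum]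
        simp only [map_mul]

lemma card_pow_succ_dvd {p n k : ℕ} (hp : p.Prime) (hn : n ≠ 0) (hk : n.factorization p ≤ k) :
    ({j ∈ Finset.range k | p ^ (j + 1) ∣ n} : Finset ℕ).card = n.factorization p := by
  have hfilter : {j ∈ Finset.range k | p ^ (j + 1) ∣ n} = Finset.range (n.factorization p) := by
    ext j
    rw [Finset.mem_filter, Finset.mem_range, Finset.mem_range,
      hp.pow_dvd_iff_le_factorization hn]
    lia
  rw [hfilter, Finset.card_range]

lemma sum_card_pow_dvd_eq {k N n : ℕ} (hn : n ∈ almostPrimesBelow k N) :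
    ∑ p ∈ N.primesBelow, ({j ∈ Finset.range k | p ^ (j + 1) ∣ n} : Finset ℕ).card = k := by
  obtain ⟨hlt, hn0, hΩ⟩ := mem_almostPrimesBelow.mp hn
  have hsub : n.primeFactors ⊆ N.primesBelow := fun p hp ↦ Nat.mem_primesBelow.mpr
    ⟨(Nat.le_of_mem_primeFactors hp).trans_lt hlt, Nat.prime_of_mem_primeFactors hp⟩
  have hsum : ∑ p ∈ n.primeFactors, n.factorization p = k := by
    rw [← hΩ, ArithmeticFunction.cardFactors_eq_sum_factorization]
    rfl
  have hzero (p) (hp : p ∉ n.primeFactors) : n.factorization p = 0 :=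
    Finsupp.notMem_support_iff.mp hp
  have hle (p : ℕ) : n.factorization p ≤ k := by
    by_cases hp : p ∈ n.primeFactors
    · exact hsum ▸ Finset.single_le_sum (fun _ _ ↦ Nat.zero_le _) hp
    · exact (hzero p hp).trans_le (Nat.zero_le _)
  calc _ = ∑ p ∈ N.primesBelow, n.factorization p := Finset.sum_congr rfl fun p hp ↦
        card_pow_succ_dvd (Nat.prime_of_mem_primesBelow hp) hn0 (hle p)
    _ = k := by rw [← Finset.sum_subset hsub fun p _ ↦ hzero p, hsum]

lemma newton_inequality_almostPrimesBelow (hf : ∀ n, 0 ≤ f n) (k N : ℕ) :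
    k * ∑ n ∈ almostPrimesBelow k N, f n ≤
      ∑ j ∈ Finset.range k, (∑ p ∈ N.primesBelow, f p ^ (j + 1)) *
        ∑ m ∈ almostPrimesBelow (k - 1 - j) N, f m := by
  calc k * ∑ n ∈ almostPrimesBelow k N, f n
      = ∑ n ∈ almostPrimesBelow k N, ∑ p ∈ N.primesBelow, ∑ j ∈ Finset.range k,
          if p ^ (j + 1) ∣ n then f n else 0 := by
        rw [Finset.mul_sum]
        refine Finset.sum_congr rfl fun n hn ↦ ?_
        nth_rewrite 1 [← sum_card_pow_dvd_eq hn]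
        rw [Nat.cast_sum, Finset.sum_mul]
        simp only [← Finset.sum_filter, Finset.sum_const, nsmul_eq_mul]
    _ = ∑ j ∈ Finset.range k, ∑ p ∈ N.primesBelow,
          ∑ n ∈ almostPrimesBelow k N with p ^ (j + 1) ∣ n, f n := by
        simp only [Finset.sum_filter]
        rw [Finset.sum_comm]
        refine (Finset.sum_congr rfl fun p _ ↦ Finset.sum_comm).trans Finset.sum_comm
    _ ≤ ∑ j ∈ Finset.range k, ∑ p ∈ N.primesBelow,
          f p ^ (j + 1) * ∑ m ∈ almostPrimesBelow (k - 1 - j) N, f m := by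
        gcongr with j hj p hp
        have hlt := Finset.mem_range.mp hj
        have hle := sum_almostPrimesBelow_filter_dvd_le hf
          (isAlmostPrime_prime_pow (Nat.prime_of_mem_primesBelow hp) (j + 1)) (k - 1 - j) N
        rwa [show j + 1 + (k - 1 - j) = k by lia, map_pow] at hle
    _ = _ := by simp only [Finset.sum_mul]

end NewtonInequality

/-- The complete homogeneous symmetric functions in terms of power sums: the solution of Newton's
recursion `(k + 1) h (k + 1) = ∑ i ≤ k, c (k - i) * h i` with `h 0 = 1`, where `c j` stands for the
power sum of exponent `j + 1`. -/
noncomputable def newtonSeq (c : ℕ → ℝ) : ℕ → ℝ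
  | 0 => 1
  | k + 1 => (∑ i : Fin (k + 1), c (k - i) * newtonSeq c i) / (k + 1)

lemma newtonSeq_zero (c : ℕ → ℝ) : newtonSeq c 0 = 1 := by rw [newtonSeq]

lemma newtonSeq_succ (c : ℕ → ℝ) (k : ℕ) :
    newtonSeq c (k + 1) = (∑ i ∈ Finset.range (k + 1), c (k - i) * newtonSeq c i) / (k + 1) := by
  rw [newtonSeq, Finset.sum_range fun i ↦ c (k - i) * newtonSeq c i]

lemma newtonSeq_nonneg {c : ℕ → ℝ} (hc : ∀ j, 0 ≤ c j) (k : ℕ) : 0 ≤ newtonSeq c k := by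
  induction k using Nat.strong_induction_on with
  | _ k ih =>
    cases k with
    | zero => rw [newtonSeq_zero]; exact zero_le_one
    | succ k =>
      rw [newtonSeq_succ]
      exact div_nonneg (Finset.sum_nonneg fun i hi ↦
        mul_nonneg (hc _) (ih i (Finset.mem_range.mp hi))) (by positivity)

lemma le_newtonSeq {c F : ℕ → ℝ} (hc : ∀ j, 0 ≤ c j) (h0 : F 0 ≤ 1)
    (hF : ∀ k, (k + 1) * F (k + 1) ≤ ∑ i ∈ Finset.range (k + 1), c (k - i) * F i) (k : ℕ) :
    F k ≤ newtonSeq c k := by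
  induction k using Nat.strong_induction_on with
  | _ k ih =>
    cases k with
    | zero => rwa [newtonSeq_zero]
    | succ k =>
      rw [newtonSeq_succ, le_div_iff₀' (by positivity)]
      refine (hF k).trans (Finset.sum_le_sum fun i hi ↦ ?_)
      exact mul_le_mul_of_nonneg_left (ih i (Finset.mem_range.mp hi)) (hc _)

lemma sum_almostPrimesBelow_le_newtonSeq {f : ℕ →* ℝ} (hf : ∀ n, 0 ≤ f n) {c : ℕ → ℝ} {N : ℕ}
    (hc : ∀ j, ∑ p ∈ N.primesBelow, f p ^ (j + 1) ≤ c j) (k : ℕ) :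
    ∑ n ∈ almostPrimesBelow k N, f n ≤ newtonSeq c k := by
  have hc0 (j) : 0 ≤ c j := (Finset.sum_nonneg fun p _ ↦ pow_nonneg (hf p) _).trans (hc j)
  refine le_newtonSeq (F := fun k ↦ ∑ n ∈ almostPrimesBelow k N, f n) hc0 ?_ (fun k ↦ ?_) k
  · calc _ ≤ ∑ n ∈ {1}, f n := Finset.sum_le_sum_of_subset_of_nonneg
          (almostPrimesBelow_zero_subset N) fun n _ _ ↦ hf n
      _ = 1 := by rw [Finset.sum_singleton, map_one]
  · have hnewton := newton_inequality_almostPrimesBelow hf (k + 1) N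
    rw [← Finset.sum_range_reflect] at hnewton
    push_cast at hnewton
    refine hnewton.trans (Finset.sum_le_sum fun i hi ↦ ?_)
    rw [Nat.sub_sub_self (Finset.mem_range_succ_iff.mp hi)]
    exact mul_le_mul_of_nonneg_right (hc _) (Finset.sum_nonneg fun n _ ↦ hf n)

lemma newtonSeq_update_succ (c : ℕ → ℝ) (x : ℝ) (k : ℕ) :
    newtonSeq (Function.update c 0 x) (k + 1) =
      (∑ i ∈ Finset.range k, c (k - i) * newtonSeq (Function.update c 0 x) i
        + x * newtonSeq (Function.update c 0 x) k) / (k + 1) := by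
  rw [newtonSeq_succ, Finset.sum_range_succ, Nat.sub_self, Function.update_self]
  congr 2
  refine Finset.sum_congr rfl fun i hi ↦ ?_
  rw [Function.update_of_ne (Nat.sub_ne_zero_of_lt (Finset.mem_range.mp hi))]

lemma hasDerivAt_newtonSeq_update (c : ℕ → ℝ) (k : ℕ) (x : ℝ) :
    HasDerivAt (fun y ↦ newtonSeq (Function.update c 0 y) (k + 1))
      (newtonSeq (Function.update c 0 x) k) x := by
  induction k using Nat.strong_induction_on with
  | _ k ih =>
    cases k with
    | zero =>
      simp only [newtonSeq_update_succ, newtonSeq_zero, Finset.range_zero, Finset.sum_empty,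
        zero_add, mul_one, Nat.cast_zero, div_one]
      exact hasDerivAt_id' x
    | succ k =>
      have hsum : HasDerivAt (fun y ↦ ∑ i ∈ Finset.range k,
            c (k + 1 - (i + 1)) * newtonSeq (Function.update c 0 y) (i + 1) + c (k + 1))
          (∑ i ∈ Finset.range k, c (k - i) * newtonSeq (Function.update c 0 x) i) x := by
        simp only [Nat.add_sub_add_right]
        exact (HasDerivAt.fun_sum fun i (hi : i ∈ Finset.range k) ↦
          (ih i ((Finset.mem_range.mp hi).trans k.lt_succ_self)).const_mul _).add_const _
      have hmul := (hasDerivAt_id' x).fun_mul (ih k k.lt_succ_self)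
      simp only [newtonSeq_update_succ c _ (k + 1), Finset.sum_range_succ' _ k, newtonSeq_zero,
        Nat.sub_zero, mul_one]
      refine ((hsum.fun_add hmul).div_const _).congr_deriv ?_
      have hrec := newtonSeq_update_succ c x k
      rw [eq_div_iff (by positivity)] at hrec
      rw [div_eq_iff (by positivity)]
      push_cast
      linarith

/-- An upper bound for `P_k(s)` in terms of upper bounds `U`, `a`, `b` for `P(s)`, `2 ^ (-s)` and
`3 ^ (-s)`: Newton's recursion with `∑ p, p ^ (-j s)` replaced by `a ^ j + 9 / 4 * b ^ j` for
`2 ≤ j`. -/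
noncomputable def almostPrimeBound (a b U : ℝ) : ℕ → ℝ :=
  newtonSeq (Function.update (fun j ↦ a ^ (j + 1) + 9 / 4 * b ^ (j + 1)) 0 U)

section AlmostPrimeBound

variable {a b U : ℝ}

lemma almostPrimeBound_nonneg (ha : 0 ≤ a) (hb : 0 ≤ b) (hU : 0 ≤ U) (k : ℕ) :
    0 ≤ almostPrimeBound a b U k := by
  refine newtonSeq_nonneg (fun j ↦ ?_) k
  rcases eq_or_ne j 0 with rfl | hj
  · rwa [Function.update_self]
  · rw [Function.update_of_ne hj]
    positivity

lemma almostPrimeBound_zero : almostPrimeBound a b U 0 = 1 := newtonSeq_zero _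

lemma sum_almostPrimesBelow_rpow_le {s : ℝ} (hs : 1 ≤ s) (ha : 2 ^ (-s) ≤ a) (hb : 3 ^ (-s) ≤ b)
    {N : ℕ} (hU : ∑ p ∈ N.primesBelow, (p : ℝ) ^ (-s) ≤ U) (k : ℕ) :
    ∑ n ∈ almostPrimesBelow k N, (n : ℝ) ^ (-s) ≤ almostPrimeBound a b U k := by
  refine sum_almostPrimesBelow_le_newtonSeq (f := rpowNegHom s)
    (fun n ↦ rpow_nonneg n.cast_nonneg _) (fun j ↦ ?_) k
  rcases eq_or_ne j 0 with rfl | hj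
  · simp only [Function.update_self, zero_add, pow_one]
    exact hU
  · have hpow {x : ℝ} (hx : 0 ≤ x) : (x ^ (-s)) ^ (j + 1) = x ^ (-(s * (j + 1 : ℕ))) := by
      rw [← rpow_mul_natCast hx, neg_mul]
    have hj1 : (1 : ℝ) ≤ j := by exact_mod_cast Nat.one_le_iff_ne_zero.mpr hj
    rw [Function.update_of_ne hj]
    calc ∑ p ∈ N.primesBelow, rpowNegHom s p ^ (j + 1)
        = ∑ p ∈ N.primesBelow, (p : ℝ) ^ (-(s * (j + 1 : ℕ))) :=
          Finset.sum_congr rfl fun p _ ↦ hpow p.cast_nonneg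
      _ ≤ 2 ^ (-(s * (j + 1 : ℕ))) + 9 / 4 * 3 ^ (-(s * (j + 1 : ℕ))) :=
          sum_primes_rpow_le_of_two_le (by push_cast; nlinarith)
            fun p hp ↦ Nat.prime_of_mem_primesBelow hp
      _ = ((2 : ℝ) ^ (-s)) ^ (j + 1) + 9 / 4 * (3 ^ (-s)) ^ (j + 1) := by
          rw [hpow two_pos.le, hpow three_pos.le]
      _ ≤ a ^ (j + 1) + 9 / 4 * b ^ (j + 1) := by gcongr

lemma hasDerivAt_mul_sum_almostPrimeBound {δ t : ℝ} (hδ : 0 < δ) (ht : 0 < t) (k : ℕ) :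
    HasDerivAt
      (fun t ↦ t * ∑ i ∈ Finset.range (k + 1), almostPrimeBound a b (U + log (δ / t)) i)
      (almostPrimeBound a b (U + log (δ / t)) k) t := by
  have hlog : HasDerivAt (fun t ↦ U + log (δ / t)) (-t⁻¹) t := by
    have hdiv : HasDerivAt (fun t ↦ δ / t) (δ * -(t ^ 2)⁻¹) t :=
      (hasDerivAt_inv ht.ne').const_mul δ
    refine ((hdiv.log (by positivity)).const_add U).congr_deriv ?_
    field_simp
  have hbound (i : ℕ) : HasDerivAt (fun t ↦ almostPrimeBound a b (U + log (δ / t)) (i + 1))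
      (almostPrimeBound a b (U + log (δ / t)) i * -t⁻¹) t :=
    HasDerivAt.comp t (hasDerivAt_newtonSeq_update _ i _) hlog
  have hsum := (HasDerivAt.fun_sum fun i (_ : i ∈ Finset.range k) ↦ hbound i).add_const 1
  simp only [Finset.sum_range_succ' _ k, almostPrimeBound_zero]
  refine ((hasDerivAt_id' t).fun_mul hsum).congr_deriv ?_
  have hshift : ∑ i ∈ Finset.range k, almostPrimeBound a b (U + log (δ / t)) (i + 1) + 1 =
      ∑ i ∈ Finset.range k, almostPrimeBound a b (U + log (δ / t)) i
        + almostPrimeBound a b (U + log (δ / t)) k := by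
    rw [← Finset.sum_range_succ, Finset.sum_range_succ', almostPrimeBound_zero]
  rw [hshift, ← Finset.sum_mul]
  field_simp
  ring

lemma hasDerivAt_sum_rpow_neg_div_log {A : Finset ℕ} (hA : ∀ n ∈ A, 1 < n) (t : ℝ) :
    HasDerivAt (fun t ↦ ∑ n ∈ A, (n : ℝ) ^ (-(1 + t)) / log n)
      (-∑ n ∈ A, (n : ℝ) ^ (-(1 + t))) t := by
  rw [← Finset.sum_neg_distrib]
  refine HasDerivAt.fun_sum fun n hn ↦ ?_
  have hn1 : (1 : ℝ) < n := by exact_mod_cast hA n hn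
  have hlin : HasDerivAt (fun t : ℝ ↦ -(1 + t)) (-1) t := ((hasDerivAt_id' t).const_add 1).fun_neg
  refine ((hlin.const_rpow (by linarith)).div_const _).congr_deriv ?_
  field_simp [(log_pos hn1).ne']

/-- The sum of `n ^ (-(1 + t)) / log n` over the `k`-almost primes `n < N`: a partial sum of
`f(N_k, 0)` at `t = 0`. -/
noncomputable def logSumBelow (k N : ℕ) (t : ℝ) : ℝ :=
  ∑ n ∈ almostPrimesBelow k N, (n : ℝ) ^ (-(1 + t)) / log n

lemma hasDerivAt_logSumBelow {k : ℕ} (hk : k ≠ 0) (N : ℕ) (t : ℝ) :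
    HasDerivAt (logSumBelow k N) (-∑ n ∈ almostPrimesBelow k N, (n : ℝ) ^ (-(1 + t))) t :=
  hasDerivAt_sum_rpow_neg_div_log
    (fun _ hn ↦ one_lt_of_isAlmostPrime hk (mem_almostPrimesBelow.mp hn).2) t

lemma sum_almostPrimesBelow_rpow_le_of_pos {δ t : ℝ} (hδ1 : δ ≤ 1) (ht : 0 < t) (htδ : t ≤ δ)
    {W : Finset ℕ} (hU : primeZetaBound W δ ≤ U) {N : ℕ} (hW : W ⊆ N.primesBelow) (k : ℕ) :
    ∑ n ∈ almostPrimesBelow k N, (n : ℝ) ^ (-(1 + t)) ≤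
      almostPrimeBound (1 / 2) (1 / 3) (U + log (δ / t)) k := by
  have hpow {x : ℝ} (hx : 1 ≤ x) : x ^ (-(1 + t)) ≤ 1 / x := by
    rw [one_div, ← rpow_neg_one]
    exact rpow_le_rpow_of_exponent_le hx (by linarith)
  refine sum_almostPrimesBelow_rpow_le (by linarith) (hpow one_le_two) (hpow (by norm_num)) ?_ k
  exact (sum_primes_rpow_le ht htδ hδ1 (fun p hp ↦ Nat.prime_of_mem_primesBelow hp) hW).trans
    (by gcongr)

lemma primeZetaBound_add_log_nonneg {δ t : ℝ} (hδ1 : δ ≤ 1) (ht : 0 < t) (htδ : t ≤ δ)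
    {W : Finset ℕ} (hW : ∀ p ∈ W, p.Prime) : 0 ≤ primeZetaBound W δ + log (δ / t) :=
  (Finset.sum_nonneg fun p _ ↦ rpow_nonneg p.cast_nonneg _).trans
    (sum_primes_rpow_le ht htδ hδ1 hW subset_rfl)

/- The derivative of `t ↦ t * ∑ i ≤ k, almostPrimeBound … i` dominates that of `-logSumBelow`, so
the sum of the two functions increases on `(0, δ]`; let `t → 0`. -/
lemma logSumBelow_zero_le {δ : ℝ} (hδ : 0 < δ) (hδ1 : δ ≤ 1) {W : Finset ℕ}
    (hU : primeZetaBound W δ ≤ U) {k N : ℕ} (hk : k ≠ 0) (hW : W ⊆ N.primesBelow) :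
    logSumBelow k N 0 ≤
      δ * ∑ i ∈ Finset.range (k + 1), almostPrimeBound (1 / 2) (1 / 3) U i
        + logSumBelow k N δ := by
  set H : ℝ → ℝ := fun t ↦
    t * ∑ i ∈ Finset.range (k + 1), almostPrimeBound (1 / 2) (1 / 3) (U + log (δ / t)) i
  have hH0 {t : ℝ} (ht : t ∈ Set.Ioc 0 δ) : 0 ≤ H t := by
    refine mul_nonneg ht.1.le (Finset.sum_nonneg fun i _ ↦
      almostPrimeBound_nonneg (by norm_num) (by norm_num) ?_ i)
    linarith [primeZetaBound_add_log_nonneg hδ1 ht.1 ht.2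
      fun p hp ↦ Nat.prime_of_mem_primesBelow (hW hp)]
  have hderiv {t : ℝ} (ht : 0 < t) := (hasDerivAt_mul_sum_almostPrimeBound (a := 1 / 2)
    (b := 1 / 3) (U := U) hδ ht k).fun_add (hasDerivAt_logSumBelow hk N t)
  have hmono : MonotoneOn (fun t ↦ H t + logSumBelow k N t) (Set.Ioc 0 δ) := by
    refine monotoneOn_of_hasDerivWithinAt_nonneg (convex_Ioc 0 δ)
      (fun t ht ↦ (hderiv ht.1).continuousAt.continuousWithinAt)
      (fun t ht ↦ (hderiv (interior_subset ht).1).hasDerivWithinAt) fun t ht ↦ ?_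
    obtain ⟨ht0, htδ⟩ := interior_subset ht
    linarith [sum_almostPrimesBelow_rpow_le_of_pos hδ1 ht0 htδ hU hW k]
  have hle : ∀ᶠ t in nhdsWithin 0 (Set.Ioi 0), logSumBelow k N t ≤ H δ + logSumBelow k N δ := by
    filter_upwards [Ioc_mem_nhdsGT hδ] with t ht
    linarith [hH0 ht, hmono ht (Set.right_mem_Ioc.mpr hδ) ht.2]
  have hlim : Filter.Tendsto (logSumBelow k N) (nhdsWithin 0 (Set.Ioi 0))
      (nhds (logSumBelow k N 0)) :=
    (hasDerivAt_logSumBelow hk N 0).continuousAt.tendsto.mono_left nhdsWithin_le_nhds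
  have hHδ : H δ = δ * ∑ i ∈ Finset.range (k + 1), almostPrimeBound (1 / 2) (1 / 3) U i := by
    simp only [H, div_self hδ.ne', log_one, add_zero]
  exact hHδ ▸ le_of_tendsto hlim hle

end AlmostPrimeBound

-- The trapezoidal rule overestimates the integral of the convex function `t ↦ x ^ (-(1 + t))`.
lemma rpow_neg_div_log_le_trapezoid {x s t : ℝ} (hx : 1 < x) (hst : s ≤ t) :
    x ^ (-(1 + s)) / log x ≤
      (t - s) / 2 * (x ^ (-(1 + s)) + x ^ (-(1 + t))) + x ^ (-(1 + t)) / log x := by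
  have hx0 : 0 < x := one_pos.trans hx
  have hlog : 0 < log x := log_pos hx
  set q : ℝ := x ^ (t - s)
  have hq : 1 ≤ q := one_le_rpow hx.le (sub_nonneg.mpr hst)
  have hlogq : 2 * (q - 1) ≤ (t - s) * log x * (q + 1) := by
    have hle := le_log_one_add_of_nonneg (sub_nonneg.mpr hq)
    rw [add_sub_cancel, log_rpow hx0, div_le_iff₀ (by linarith)] at hle
    linarith
  have hsplit : x ^ (-(1 + s)) = q * x ^ (-(1 + t)) := by
    rw [← rpow_add hx0]
    ring_nf
  have hpos : 0 < x ^ (-(1 + t)) := rpow_pos_of_pos hx0 _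
  rw [hsplit, div_le_iff₀ hlog, add_mul, div_mul_cancel₀ _ hlog.ne']
  nlinarith

lemma logSumBelow_le_trapezoid {k : ℕ} (hk : k ≠ 0) (N : ℕ) {s t : ℝ} (hst : s ≤ t) :
    logSumBelow k N s ≤ (t - s) / 2 * (∑ n ∈ almostPrimesBelow k N, (n : ℝ) ^ (-(1 + s))
      + ∑ n ∈ almostPrimesBelow k N, (n : ℝ) ^ (-(1 + t))) + logSumBelow k N t := by
  rw [logSumBelow, logSumBelow, ← Finset.sum_add_distrib, Finset.mul_sum, ← Finset.sum_add_distrib]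
  refine Finset.sum_le_sum fun n hn ↦ rpow_neg_div_log_le_trapezoid ?_ hst
  exact_mod_cast one_lt_of_isAlmostPrime hk (mem_almostPrimesBelow.mp hn).2

lemma mul_log_two_le_log_of_isAlmostPrime {k n : ℕ} (hn : Nat.IsAlmostPrime k n) :
    k * log 2 ≤ log n := by
  rw [← log_pow]
  exact log_le_log (by positivity) (by exact_mod_cast two_pow_le_of_isAlmostPrime hn)

lemma logSumBelow_le_div {k : ℕ} (hk : k ≠ 0) (N : ℕ) (t : ℝ) :
    logSumBelow k N t ≤ (∑ n ∈ almostPrimesBelow k N, (n : ℝ) ^ (-(1 + t))) / (k * log 2) := by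
  rw [Finset.sum_div]
  refine Finset.sum_le_sum fun n hn ↦ ?_
  gcongr
  exact mul_log_two_le_log_of_isAlmostPrime (mem_almostPrimesBelow.mp hn).2

/-! ### Numerical bounds at `h = 0` -/

lemma le_rpow_neg_div {x y : ℝ} (hx : 0 < x) {m q : ℕ} (hq : q ≠ 0) (h : y ^ q * x ^ m ≤ 1) :
    y ≤ x ^ (-(m / q : ℝ)) := by
  refine le_of_pow_le_pow_left₀ hq (by positivity) ?_
  rw [← rpow_mul_natCast hx.le, neg_mul, div_mul_cancel₀ _ (Nat.cast_ne_zero.mpr hq),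
    rpow_neg hx.le, rpow_natCast, ← one_div, le_div_iff₀ (by positivity)]
  exact h

lemma rpow_neg_div_le {x y : ℝ} (hx : 0 < x) (hy : 0 ≤ y) {m q : ℕ} (hq : q ≠ 0)
    (h : 1 ≤ y ^ q * x ^ m) : x ^ (-(m / q : ℝ)) ≤ y := by
  refine le_of_pow_le_pow_left₀ hq hy ?_
  rw [← rpow_mul_natCast hx.le, neg_mul, div_mul_cancel₀ _ (Nat.cast_ne_zero.mpr hq),
    rpow_neg hx.le, rpow_natCast, ← one_div, div_le_iff₀ (by positivity)]
  exact h

lemma primeZetaBound_le_of_pow {W : Finset ℕ} (hW : ∀ p ∈ W, 1 < p) {δ U : ℝ} (hδ : 0 < δ)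
    {m q : ℕ} (hq : q ≠ 0) (hmq : 1 + δ = m / q) {y : ℕ → ℝ}
    (hy : ∀ p ∈ W, 0 ≤ y p ∧ y p ^ q * p ^ m ≤ 1) (hyU : ∑ p ∈ W, y p ≤ U) (l : ℕ)
    (hU : (1 / δ + 2 / 3) * ∏ p ∈ W, (1 - y p) ≤
      ∑ i ∈ Finset.range l, (U - ∑ p ∈ W, y p) ^ i / i.factorial) :
    primeZetaBound W δ ≤ U := by
  refine primeZetaBound_le hW hδ (fun p hp ↦ ⟨(hy p hp).1, ?_⟩)
    (hU.trans (sum_le_exp_of_nonneg (sub_nonneg.mpr hyU) l))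
  rw [hmq]
  exact le_rpow_neg_div (by exact_mod_cast one_pos.trans (hW p hp)) hq (hy p hp).2

lemma primeZetaBound_one_fifth_le : primeZetaBound {2, 3, 5, 7} (1 / 5) ≤ 1.54 := by
  refine primeZetaBound_le_of_pow (m := 6) (q := 5) (l := 7) (by decide) (by norm_num) (by decide)
    (by norm_num)
    (y := fun | 2 => 0.4352 | 3 => 0.2675 | 5 => 0.1449 | 7 => 0.0968 | _ => 0) ?_ ?_ ?_
  · norm_num
  · norm_num
  · norm_num [Finset.sum_range_succ, Nat.factorial]

lemma primeZetaBound_one_half_le : primeZetaBound {2, 3, 5, 7} (1 / 2) ≤ 0.8715 := by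
  refine primeZetaBound_le_of_pow (m := 3) (q := 2) (l := 5) (by decide) (by norm_num) (by decide)
    (by norm_num)
    (y := fun | 2 => 0.3535 | 3 => 0.1924 | 5 => 0.0894 | 7 => 0.0539 | _ => 0) ?_ ?_ ?_
  · norm_num
  · norm_num
  · norm_num [Finset.sum_range_succ, Nat.factorial]

lemma primeZetaBound_one_le : primeZetaBound {2, 3, 5, 7} 1 ≤ 0.4655 := by
  refine primeZetaBound_le_of_pow (m := 2) (q := 1) (l := 3) (by decide) (by norm_num) (by decide)
    (by norm_num)
    (y := fun | 2 => 0.25 | 3 => 0.1111 | 5 => 0.04 | 7 => 0.0204 | _ => 0) ?_ ?_ ?_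
  · norm_num
  · norm_num
  · norm_num [Finset.sum_range_succ, Nat.factorial]

lemma almostPrimeBound_succ (a b U : ℝ) (k : ℕ) :
    almostPrimeBound a b U (k + 1) =
      (∑ i ∈ Finset.range k, (a ^ (k - i + 1) + 9 / 4 * b ^ (k - i + 1)) * almostPrimeBound a b U i
        + U * almostPrimeBound a b U k) / (k + 1) :=
  newtonSeq_update_succ _ U k

lemma sum_almostPrimesBelow_rpow_le_of_primeZetaBound_le {a b U δ : ℝ} (hδ : 0 < δ) (hδ1 : δ ≤ 1)
    (ha : 2 ^ (-(1 + δ)) ≤ a) (hb : 3 ^ (-(1 + δ)) ≤ b) {W : Finset ℕ}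
    (hU : primeZetaBound W δ ≤ U) {N : ℕ} (hW : W ⊆ N.primesBelow) (k : ℕ) :
    ∑ n ∈ almostPrimesBelow k N, (n : ℝ) ^ (-(1 + δ)) ≤ almostPrimeBound a b U k := by
  refine sum_almostPrimesBelow_rpow_le (by linarith) ha hb ?_ k
  have hle := sum_primes_rpow_le hδ le_rfl hδ1 (fun p hp ↦ Nat.prime_of_mem_primesBelow hp) hW
  rw [div_self hδ.ne', log_one, add_zero] at hle
  exact hle.trans hU

lemma two_three_five_seven_subset_primesBelow {N : ℕ} (hN : 8 ≤ N) :
    {2, 3, 5, 7} ⊆ N.primesBelow := by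
  intro p hp
  simp only [Finset.mem_insert, Finset.mem_singleton] at hp
  rcases hp with rfl | rfl | rfl | rfl <;>
    exact Nat.mem_primesBelow.mpr ⟨by lia, by norm_num⟩

lemma sum_almostPrimesBelow_rpow_one_fifth_le {N : ℕ} (hN : 8 ≤ N) (k : ℕ) :
    ∑ n ∈ almostPrimesBelow k N, (n : ℝ) ^ (-(1 + 1 / 5 : ℝ)) ≤
      almostPrimeBound (1 / 2) (1 / 3) 1.54 k := by
  have hpow {x : ℝ} (hx : 1 ≤ x) : x ^ (-(1 + 1 / 5 : ℝ)) ≤ 1 / x := by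
    rw [one_div x, ← rpow_neg_one]
    exact rpow_le_rpow_of_exponent_le hx (by norm_num)
  exact sum_almostPrimesBelow_rpow_le_of_primeZetaBound_le (by norm_num) (by norm_num)
    (hpow one_le_two) (hpow (by norm_num : (1 : ℝ) ≤ 3)) primeZetaBound_one_fifth_le
    (two_three_five_seven_subset_primesBelow hN) k

lemma sum_almostPrimesBelow_rpow_one_half_le {N : ℕ} (hN : 8 ≤ N) (k : ℕ) :
    ∑ n ∈ almostPrimesBelow k N, (n : ℝ) ^ (-(1 + 1 / 2 : ℝ)) ≤
      almostPrimeBound 0.3536 0.1925 0.8715 k := by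
  have hexp : (1 + 1 / 2 : ℝ) = (3 : ℕ) / (2 : ℕ) := by norm_num
  refine sum_almostPrimesBelow_rpow_le_of_primeZetaBound_le (by norm_num) (by norm_num) ?_ ?_
    primeZetaBound_one_half_le (two_three_five_seven_subset_primesBelow hN) k <;> rw [hexp]
  · exact rpow_neg_div_le (by norm_num) (by norm_num) (by norm_num) (by norm_num)
  · exact rpow_neg_div_le (by norm_num) (by norm_num) (by norm_num) (by norm_num)

lemma sum_almostPrimesBelow_rpow_one_le {N : ℕ} (hN : 8 ≤ N) (k : ℕ) :
    ∑ n ∈ almostPrimesBelow k N, (n : ℝ) ^ (-(1 + 1 : ℝ)) ≤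
      almostPrimeBound (1 / 4) (1 / 9) 0.4655 k := by
  refine sum_almostPrimesBelow_rpow_le_of_primeZetaBound_le one_pos le_rfl ?_ ?_
    primeZetaBound_one_le (two_three_five_seven_subset_primesBelow hN) k <;>
  · rw [one_add_one_eq_two, rpow_neg (by norm_num), rpow_two]
    norm_num

lemma logSumBelow_one_le {k N : ℕ} (hk : k ≠ 0) (hN : 8 ≤ N) :
    logSumBelow k N 1 ≤ almostPrimeBound (1 / 4) (1 / 9) 0.4655 k / (k * 0.693) := by
  have hlog := log_two_gt_d9
  refine (logSumBelow_le_div hk N 1).trans ?_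
  gcongr
  · exact almostPrimeBound_nonneg (by norm_num) (by norm_num) (by norm_num) k
  · exact sum_almostPrimesBelow_rpow_one_le hN k
  · linarith

lemma logSumBelow_zero_le_of_le_four {k N : ℕ} (hk2 : 2 ≤ k) (hk4 : k ≤ 4) (hN : 8 ≤ N) :
    logSumBelow k N 0 ≤ 1.36 := by
  have hk : k ≠ 0 := by lia
  have hint := logSumBelow_zero_le (by norm_num) (by norm_num) primeZetaBound_one_fifth_le hk
    (two_three_five_seven_subset_primesBelow hN)
  have htrap₁ := logSumBelow_le_trapezoid hk N (by norm_num : (1 / 5 : ℝ) ≤ 1 / 2)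
  have htrap₂ := logSumBelow_le_trapezoid hk N (by norm_num : (1 / 2 : ℝ) ≤ 1)
  have htail := logSumBelow_one_le hk hN
  calc logSumBelow k N 0
      ≤ 1 / 5 * ∑ i ∈ Finset.range (k + 1), almostPrimeBound (1 / 2) (1 / 3) 1.54 i
        + 3 / 20 * (almostPrimeBound (1 / 2) (1 / 3) 1.54 k
          + almostPrimeBound 0.3536 0.1925 0.8715 k)
        + 1 / 4 * (almostPrimeBound 0.3536 0.1925 0.8715 k
          + almostPrimeBound (1 / 4) (1 / 9) 0.4655 k)
        + almostPrimeBound (1 / 4) (1 / 9) 0.4655 k / (k * 0.693) := by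
        linarith [sum_almostPrimesBelow_rpow_one_fifth_le hN k,
          sum_almostPrimesBelow_rpow_one_half_le hN k, sum_almostPrimesBelow_rpow_one_le hN k]
    _ ≤ 1.36 := by
        interval_cases k <;>
          norm_num [almostPrimeBound_succ, almostPrimeBound_zero, Finset.sum_range_succ]

/- The condition on `c` makes `M * r ^ k` a supersolution of Newton's recursion beyond `K`. -/
lemma newtonSeq_le_mul_pow {c : ℕ → ℝ} (hc : ∀ j, 0 ≤ c j) {M r : ℝ} (hM : 0 ≤ M) (hr : 0 < r)
    {K : ℕ} (hbase : ∀ k ≤ K, newtonSeq c k ≤ M * r ^ k)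
    (hsum : ∀ k ≥ K, ∑ j ∈ Finset.range (k + 1), c j / r ^ (j + 1) ≤ k + 1) (k : ℕ) :
    newtonSeq c k ≤ M * r ^ k := by
  induction k using Nat.strong_induction_on with
  | _ k ih =>
    rcases le_or_gt k K with hk | hk
    · exact hbase k hk
    obtain ⟨k, rfl⟩ := Nat.exists_eq_add_one_of_ne_zero (Nat.ne_zero_of_lt hk)
    rw [newtonSeq_succ, div_le_iff₀ (by positivity)]
    calc ∑ i ∈ Finset.range (k + 1), c (k - i) * newtonSeq c i
        ≤ ∑ i ∈ Finset.range (k + 1), c (k - i) * (M * r ^ i) := by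
          gcongr with i hi
          · exact hc _
          · exact ih i (Finset.mem_range.mp hi)
      _ = M * r ^ (k + 1) * ∑ j ∈ Finset.range (k + 1), c j / r ^ (j + 1) := by
          rw [← Finset.sum_range_reflect, Finset.mul_sum]
          refine Finset.sum_congr rfl fun i hi ↦ ?_
          have hik : i ≤ k := Finset.mem_range_succ_iff.mp hi
          rw [Nat.add_sub_cancel, Nat.sub_sub_self hik,
            show r ^ (k + 1) = r ^ (k - i) * r ^ (i + 1) by rw [← pow_add]; congr 1; lia]
          field_simp
      _ ≤ M * r ^ (k + 1) * (k + 1) := by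
          gcongr
          exact hsum k (Nat.lt_succ_iff.mp hk)

lemma almostPrimeBound_le_mul_pow (k : ℕ) :
    almostPrimeBound (1 / 2) (1 / 3) 1.54 k ≤ 5.34 * 0.6 ^ k := by
  refine newtonSeq_le_mul_pow (K := 6) (fun j ↦ ?_) (by norm_num) (by norm_num) ?_ ?_ k
  · rcases eq_or_ne j 0 with rfl | hj
    · norm_num
    · rw [Function.update_of_ne hj]
      positivity
  · change ∀ k ≤ 6, almostPrimeBound (1 / 2) (1 / 3) 1.54 k ≤ 5.34 * 0.6 ^ k
    intro k hk
    interval_cases k <;>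
      norm_num [almostPrimeBound_succ, almostPrimeBound_zero, Finset.sum_range_succ]
  · refine Nat.le_induction ?_ fun k hk ih ↦ ?_
    · norm_num [Finset.sum_range_succ, Function.update]
    · have h₁ : (5 / 6 : ℝ) ^ (k + 1 + 1) ≤ (5 / 6) ^ 8 :=
        pow_le_pow_of_le_one (by norm_num) (by norm_num) (by lia)
      have h₂ : (5 / 9 : ℝ) ^ (k + 1 + 1) ≤ (5 / 9) ^ 8 :=
        pow_le_pow_of_le_one (by norm_num) (by norm_num) (by lia)
      rw [Finset.sum_range_succ, Function.update_of_ne (by lia), add_div, mul_div_assoc, ← div_pow,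
        ← div_pow]
      norm_num at h₁ h₂ ih ⊢
      linarith

lemma sum_almostPrimeBound_add_le {k : ℕ} (hk : 5 ≤ k) :
    ∑ i ∈ Finset.range (k + 1), almostPrimeBound (1 / 2) (1 / 3) 1.54 i
      + 3 / 2 * (5.34 * 0.6 ^ k) ≤ 6.8 := by
  induction k, hk using Nat.le_induction with
  | base =>
    norm_num [almostPrimeBound_succ, almostPrimeBound_zero, Finset.sum_range_succ]
  | succ k _ ih =>
    rw [Finset.sum_range_succ, pow_succ]
    linarith [almostPrimeBound_le_mul_pow (k + 1), pow_succ (0.6 : ℝ) k]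

lemma logSumBelow_zero_le_of_ne_zero {k N : ℕ} (hk : k ≠ 0) (hN : 8 ≤ N) :
    logSumBelow k N 0 ≤
      1 / 5 * ∑ i ∈ Finset.range (k + 1), almostPrimeBound (1 / 2) (1 / 3) 1.54 i
        + almostPrimeBound (1 / 2) (1 / 3) 1.54 k / (k * log 2) := by
  refine (logSumBelow_zero_le (by norm_num) (by norm_num) primeZetaBound_one_fifth_le hk
    (two_three_five_seven_subset_primesBelow hN)).trans ?_
  gcongr
  refine (logSumBelow_le_div hk N _).trans ?_
  gcongr
  exact sum_almostPrimesBelow_rpow_one_fifth_le hN k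

lemma logSumBelow_zero_le_of_five_le {k N : ℕ} (hk : 5 ≤ k) (hN : 8 ≤ N) :
    logSumBelow k N 0 ≤ 1.36 := by
  have hlog : 10 / 3 ≤ k * log 2 := by
    have hk' : (5 : ℝ) ≤ k := by exact_mod_cast hk
    nlinarith [log_two_gt_d9]
  have htail : almostPrimeBound (1 / 2) (1 / 3) 1.54 k / (k * log 2) ≤
      3 / 10 * (5.34 * 0.6 ^ k) := by
    rw [div_le_iff₀ (by linarith)]
    have hpow : (0 : ℝ) < 0.6 ^ k := by positivity
    nlinarith [almostPrimeBound_le_mul_pow k]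
  linarith [logSumBelow_zero_le_of_ne_zero (by lia : k ≠ 0) hN, sum_almostPrimeBound_add_le hk]

lemma logSumBelow_zero_le_of_two_le {k N : ℕ} (hk : 2 ≤ k) (hN : 8 ≤ N) :
    logSumBelow k N 0 ≤ 1.36 := by
  rcases le_or_gt k 4 with hk4 | hk5
  · exact logSumBelow_zero_le_of_le_four hk hk4 hN
  · exact logSumBelow_zero_le_of_five_le hk5 hN

/-! ### The translated sums -/

/-- The summand of `transSum`. -/
noncomputable def transTerm (h : ℝ) (n : ℕ) : ℝ := 1 / (n * (log n + h))

lemma transSum_eq_tsum_transTerm (A : Set ℕ) (h : ℝ) :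
    transSum A h = ∑' n : A, transTerm h n := rfl

lemma transTerm_nonneg {h : ℝ} (hh : 0 ≤ h) (n : ℕ) : 0 ≤ transTerm h n :=
  one_div_nonneg.mpr (mul_nonneg n.cast_nonneg (add_nonneg (log_natCast_nonneg n) hh))

lemma log_natCast_pos {n : ℕ} (hn : 1 < n) : 0 < log n := log_pos (by exact_mod_cast hn)

lemma log_natCast_add_pos {h : ℝ} (hh : 0 ≤ h) {n : ℕ} (hn : 1 < n) : 0 < log n + h :=
  add_pos_of_pos_of_nonneg (log_natCast_pos hn) hh

lemma transTerm_pos {h : ℝ} (hh : 0 ≤ h) {n : ℕ} (hn : 1 < n) : 0 < transTerm h n :=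
  one_div_pos.mpr (mul_pos (by exact_mod_cast one_pos.trans hn) (log_natCast_add_pos hh hn))

lemma transTerm_le_zero {h : ℝ} (hh : 0 ≤ h) {n : ℕ} (hn : 1 < n) :
    transTerm h n ≤ transTerm 0 n := by
  have hlog := log_natCast_add_pos le_rfl hn
  unfold transTerm
  gcongr

lemma logSumBelow_zero (k N : ℕ) :
    logSumBelow k N 0 = ∑ n ∈ almostPrimesBelow k N, transTerm 0 n := by
  refine Finset.sum_congr rfl fun n _ ↦ ?_
  rw [add_zero, rpow_neg_one, transTerm, add_zero, one_div, mul_inv, div_eq_mul_inv]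

section AlmostPrimeSums

variable {k : ℕ}

lemma one_lt_coe (hk : k ≠ 0) (n : almostPrimes k) : 1 < (n : ℕ) :=
  one_lt_of_isAlmostPrime hk (mem_almostPrimes.mp n.2)

lemma sum_transTerm_zero_le {C : ℝ} (hC : ∀ N ≥ 8, logSumBelow k N 0 ≤ C)
    (A : Finset (almostPrimes k)) : ∑ n ∈ A, transTerm 0 n ≤ C := by
  obtain ⟨N, hN⟩ := (A.map (Function.Embedding.subtype _)).exists_nat_subset_range
  have hsub : A.map (Function.Embedding.subtype _) ⊆ almostPrimesBelow k (max 8 N) := fun n hn ↦ by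
    have hlt := Finset.mem_range.mp (hN hn)
    obtain ⟨m, _, rfl⟩ := Finset.mem_map.mp hn
    exact mem_almostPrimesBelow.mpr ⟨lt_max_of_lt_right hlt, mem_almostPrimes.mp m.2⟩
  calc ∑ n ∈ A, transTerm 0 n
      = ∑ n ∈ A.map (Function.Embedding.subtype _), transTerm 0 n := by
        rw [Finset.sum_map]
        rfl
    _ ≤ ∑ n ∈ almostPrimesBelow k (max 8 N), transTerm 0 n :=
        Finset.sum_le_sum_of_subset_of_nonneg hsub fun n _ _ ↦ transTerm_nonneg le_rfl n
    _ ≤ C := by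
        rw [← logSumBelow_zero]
        exact hC _ (le_max_left 8 N)

lemma summable_transTerm_zero (hk : k ≠ 0) :
    Summable fun n : almostPrimes k ↦ transTerm 0 n :=
  summable_of_sum_le (fun n ↦ transTerm_nonneg le_rfl n)
    (sum_transTerm_zero_le fun _ hN ↦ logSumBelow_zero_le_of_ne_zero hk hN)

lemma summable_transTerm (hk : k ≠ 0) {h : ℝ} (hh : 0 ≤ h) :
    Summable fun n : almostPrimes k ↦ transTerm h n :=
  (summable_transTerm_zero hk).of_nonneg_of_le (fun n ↦ transTerm_nonneg hh n)
    fun n ↦ transTerm_le_zero hh (one_lt_coe hk n)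

lemma continuousOn_transSum (hk : k ≠ 0) :
    ContinuousOn (transSum (almostPrimes k)) (Set.Ici 0) := by
  refine continuousOn_tsum (fun n h hh ↦ ?_) (summable_transTerm_zero hk) fun n h hh ↦ ?_
  · have hn := one_lt_coe hk n
    have hne : (n : ℝ) * (log n + h) ≠ 0 :=
      mul_ne_zero (by exact_mod_cast (one_pos.trans hn).ne') (log_natCast_add_pos hh hn).ne'
    fun_prop (disch := exact hne)
  · exact (norm_of_nonneg (transTerm_nonneg hh n)).trans_le (transTerm_le_zero hh (one_lt_coe hk n))

lemma transSum_pos (hk : k ≠ 0) {h : ℝ} (hh : 0 ≤ h) : 0 < transSum (almostPrimes k) h :=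
  (summable_transTerm hk hh).tsum_pos (fun n ↦ transTerm_nonneg hh n)
    ⟨2 ^ k, mem_almostPrimes.mpr (isAlmostPrime_prime_pow Nat.prime_two k)⟩
    (transTerm_pos hh (one_lt_coe hk _))

lemma transSum_zero_le (hk : 2 ≤ k) : transSum (almostPrimes k) 0 ≤ 1.36 :=
  (summable_transTerm_zero (by lia)).tsum_le_of_sum_le
    (sum_transTerm_zero_le fun _ hN ↦ logSumBelow_zero_le_of_two_le hk hN)

lemma sum_transTerm_le_transSum (hk : k ≠ 0) {h : ℝ} (hh : 0 ≤ h) {A : Finset ℕ}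
    (hA : ∀ n ∈ A, n ∈ almostPrimes k) : ∑ n ∈ A, transTerm h n ≤ transSum (almostPrimes k) h := by
  classical
  rw [← Finset.sum_subtype_of_mem _ hA]
  exact (summable_transTerm hk hh).sum_le_tsum _ fun n _ ↦ transTerm_nonneg hh n

end AlmostPrimeSums

lemma log_le_clog_div_mul_log_two {p m : ℕ} (hp : 0 < p) (hm : 0 < m) :
    log p ≤ Nat.clog 2 (p ^ m) / m * log 2 := by
  have hle : log (p ^ m) ≤ log (2 ^ Nat.clog 2 (p ^ m)) :=
    log_le_log (by positivity) (by exact_mod_cast Nat.le_pow_clog one_lt_two (p ^ m))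
  rw [log_pow, log_pow] at hle
  rw [div_mul_eq_mul_div, le_div_iff₀' (by positivity)]
  exact hle

lemma lt_transSum_one_zero : 1.36 < transSum (almostPrimes 1) 0 := by
  have hprimes : Nat.primesBelow 48 = {2, 3, 5, 7, 11, 13, 17, 19, 23, 29, 31, 37, 41, 43, 47} := by
    decide
  calc (1.36 : ℝ)
      < ∑ p ∈ Nat.primesBelow 48,
          1 / ((p : ℝ) * (Nat.clog 2 (p ^ 5) / (5 : ℕ) * 0.6931471808)) := by
        rw [hprimes]
        norm_num
    _ ≤ ∑ p ∈ Nat.primesBelow 48, transTerm 0 p := by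
        refine Finset.sum_le_sum fun p hp ↦ ?_
        have hp := Nat.prime_of_mem_primesBelow hp
        have hlog : 0 < log p := log_natCast_pos hp.one_lt
        have hle : log p ≤ Nat.clog 2 (p ^ 5) / (5 : ℕ) * 0.6931471808 :=
          (log_le_clog_div_mul_log_two hp.pos (by norm_num : 0 < 5)).trans
            (by gcongr; exact log_two_lt_d9.le)
        have hpos : (0 : ℝ) < p := by exact_mod_cast hp.pos
        rw [transTerm, add_zero]
        gcongr
    _ ≤ transSum (almostPrimes 1) 0 := sum_transTerm_le_transSum one_ne_zero le_rfl fun p hp ↦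
        mem_almostPrimes.mpr (Nat.prime_of_mem_primesBelow hp).isAlmostPrime_one

/-! ### Large translations -/

lemma transTerm_div_two_mul_le {h : ℝ} (hh : 0 ≤ h) {p m : ℕ} (hp : 0 < p) (hm : 1 < m)
    (hph : log p ≤ h) : transTerm h m / (2 * p) ≤ transTerm h (p * m) := by
  have hp0 : (0 : ℝ) < p := by exact_mod_cast hp
  have hm0 : (0 : ℝ) < m := by exact_mod_cast one_pos.trans hm
  have hlogm : 0 < log m := log_natCast_pos hm
  rw [transTerm, transTerm, div_div, Nat.cast_mul, log_mul hp0.ne' hm0.ne']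
  refine one_div_le_one_div_of_le (by positivity) ?_
  calc (p * m) * (log p + log m + h) ≤ (p * m) * (2 * (log m + h)) := by
        gcongr
        linarith [log_natCast_nonneg p]
    _ = m * (log m + h) * (2 * p) := by ring

/-- Multiplication by a prime, as a map from the `k`-almost primes to the `k + 1`-almost primes. -/
def primeMul (k : ℕ) {p : ℕ} (hp : p.Prime) (m : almostPrimes k) : almostPrimes (k + 1) :=
  ⟨p * m, mem_almostPrimes.mpr
    (add_comm k 1 ▸ hp.isAlmostPrime_one.mul (mem_almostPrimes.mp m.2))⟩

lemma primeMul_injective (k : ℕ) {p : ℕ} (hp : p.Prime) : Function.Injective (primeMul k hp) :=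
  fun _ _ h ↦ Subtype.ext (Nat.eq_of_mul_eq_mul_left hp.pos (congrArg Subtype.val h))

lemma card_filter_dvd_le {A : Finset ℕ} (hA : ∀ p ∈ A, p.Prime) {k n : ℕ}
    (hn : Nat.IsAlmostPrime k n) : ({p ∈ A | p ∣ n} : Finset ℕ).card ≤ k := by
  have hsub : ({p ∈ A | p ∣ n} : Finset ℕ) ⊆ n.primeFactors := fun p hp ↦
    have hp := Finset.mem_filter.mp hp
    Nat.mem_primeFactors.mpr ⟨hA p hp.1, hp.2, hn.1⟩
  calc _ ≤ n.primeFactors.card := Finset.card_le_card hsub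
    _ ≤ n.primeFactorsList.length := List.toFinset_card_le _
    _ = k := by rw [← ArithmeticFunction.cardFactors_apply, hn.2]

lemma summable_transTerm_of_dvd {k : ℕ} (hk : k ≠ 0) {h : ℝ} (hh : 0 ≤ h) (p : ℕ) :
    Summable fun n : almostPrimes k ↦ if p ∣ n then transTerm h n else 0 :=
  (summable_transTerm hk hh).of_nonneg_of_le
    (fun n ↦ by split_ifs; exacts [transTerm_nonneg hh n, le_rfl])
    fun n ↦ by split_ifs; exacts [le_rfl, transTerm_nonneg hh n]

lemma transSum_div_two_mul_le {k : ℕ} (hk : k ≠ 0) {h : ℝ} (hh : 0 ≤ h) {p : ℕ} (hp : p.Prime)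
    (hph : log p ≤ h) :
    transSum (almostPrimes k) h / (2 * p) ≤
      ∑' n : almostPrimes (k + 1), if p ∣ n then transTerm h n else 0 := by
  rw [transSum_eq_tsum_transTerm, ← tsum_div_const]
  refine Summable.tsum_le_tsum_of_inj (primeMul k hp) (primeMul_injective k hp)
    (fun n _ ↦ by split_ifs; exacts [transTerm_nonneg hh n, le_rfl]) (fun m ↦ ?_)
    ((summable_transTerm hk hh).div_const _) (summable_transTerm_of_dvd k.succ_ne_zero hh p)
  exact (transTerm_div_two_mul_le hh hp.pos (one_lt_coe hk m) hph).trans_eq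
    (if_pos (dvd_mul_right p m)).symm

lemma sum_inv_primes_mul_transSum_le {k : ℕ} (hk : k ≠ 0) {h : ℝ} (hh : 0 ≤ h) {A : Finset ℕ}
    (hA : ∀ p ∈ A, p.Prime) (hAh : ∀ p ∈ A, log p ≤ h) :
    (∑ p ∈ A, 1 / (p : ℝ)) / 2 * transSum (almostPrimes k) h ≤
      (k + 1) * transSum (almostPrimes (k + 1)) h := by
  calc (∑ p ∈ A, 1 / (p : ℝ)) / 2 * transSum (almostPrimes k) h
      = ∑ p ∈ A, transSum (almostPrimes k) h / (2 * p) := by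
        rw [Finset.sum_div, Finset.sum_mul]
        refine Finset.sum_congr rfl fun p _ ↦ ?_
        rw [div_div, one_div_mul_eq_div, mul_comm]
    _ ≤ ∑ p ∈ A, ∑' n : almostPrimes (k + 1), if p ∣ n then transTerm h n else 0 :=
        Finset.sum_le_sum fun p hp ↦ transSum_div_two_mul_le hk hh (hA p hp) (hAh p hp)
    _ = ∑' n : almostPrimes (k + 1), ∑ p ∈ A, if p ∣ n then transTerm h n else 0 :=
        (Summable.tsum_finsetSum fun p _ ↦ summable_transTerm_of_dvd k.succ_ne_zero hh p).symm
    _ ≤ ∑' n : almostPrimes (k + 1), (k + 1) * transTerm h n := by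
        refine Summable.tsum_le_tsum (fun n ↦ ?_)
          (summable_sum fun p _ ↦ summable_transTerm_of_dvd k.succ_ne_zero hh p)
          ((summable_transTerm k.succ_ne_zero hh).mul_left _)
        rw [← Finset.sum_filter, Finset.sum_const, nsmul_eq_mul]
        refine mul_le_mul_of_nonneg_right ?_ (transTerm_nonneg hh n)
        exact_mod_cast card_filter_dvd_le hA (mem_almostPrimes.mp n.2)
    _ = (k + 1) * transSum (almostPrimes (k + 1)) h := tsum_mul_left

lemma exists_lt_sum_inv_primes (C : ℝ) :
    ∃ A : Finset ℕ, (∀ p ∈ A, p.Prime) ∧ C < ∑ p ∈ A, 1 / (p : ℝ) := by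
  by_contra! hC
  refine Nat.Primes.not_summable_one_div (summable_of_sum_le (c := C) (fun p ↦ by positivity)
    fun A ↦ ?_)
  have hle := hC (A.map ⟨_, Nat.Primes.coe_nat_injective⟩) fun p hp ↦ by
    obtain ⟨q, _, rfl⟩ := Finset.mem_map.mp hp
    exact q.2
  exact (Finset.sum_map A _ fun p : ℕ ↦ 1 / (p : ℝ)).symm.trans_le hle

lemma eventually_transSum_lt_transSum_succ {k : ℕ} (hk : k ≠ 0) :
    ∀ᶠ h in Filter.atTop, transSum (almostPrimes k) h < transSum (almostPrimes (k + 1)) h := by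
  obtain ⟨A, hA, hlt⟩ := exists_lt_sum_inv_primes (2 * (k + 1))
  filter_upwards [Filter.eventually_ge_atTop (∑ p ∈ A, log p)] with h hh
  have hlog_nonneg (p : ℕ) (_ : p ∈ A) : 0 ≤ log p := log_natCast_nonneg p
  have hh0 : 0 ≤ h := (Finset.sum_nonneg hlog_nonneg).trans hh
  have hle := sum_inv_primes_mul_transSum_le hk hh0 hA
    fun p hp ↦ (Finset.single_le_sum hlog_nonneg hp).trans hh
  have hpos := transSum_pos hk hh0
  refine lt_of_mul_lt_mul_left (hle.trans_lt' ?_) (by positivity)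
  gcongr
  linarith

lemma eventually_transSum_one_lt_transSum {k : ℕ} (hk : 2 ≤ k) :
    ∀ᶠ h in Filter.atTop, transSum (almostPrimes 1) h < transSum (almostPrimes k) h := by
  induction k, hk using Nat.le_induction with
  | base => exact eventually_transSum_lt_transSum_succ one_ne_zero
  | succ k hk ih =>
    filter_upwards [ih, eventually_transSum_lt_transSum_succ (by lia : k ≠ 0)] with h h₁ h₂
    exact h₁.trans h₂

/-! ### Monotonicity of the ratio -/

section MaxPrimeFac

variable {m n p : ℕ}

/-- The largest prime factor of `n`, with value `0` when `n ≤ 1`. -/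
def maxPrimeFac (n : ℕ) : ℕ := n.primeFactors.sup id

lemma maxPrimeFac_mem_primeFactors (hn : 1 < n) : maxPrimeFac n ∈ n.primeFactors := by
  obtain ⟨p, hp, heq⟩ := n.primeFactors.exists_mem_eq_sup (Nat.nonempty_primeFactors.mpr hn) id
  exact Set.mem_of_eq_of_mem heq hp

lemma prime_maxPrimeFac (hn : 1 < n) : (maxPrimeFac n).Prime :=
  Nat.prime_of_mem_primeFactors (maxPrimeFac_mem_primeFactors hn)

lemma div_maxPrimeFac_mul (hn : 1 < n) : n / maxPrimeFac n * maxPrimeFac n = n :=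
  Nat.div_mul_cancel (Nat.dvd_of_mem_primeFactors (maxPrimeFac_mem_primeFactors hn))

lemma maxPrimeFac_le (n : ℕ) : maxPrimeFac n ≤ n :=
  Finset.sup_le fun _ ↦ Nat.le_of_mem_primeFactors

lemma maxPrimeFac_mul_prime (hm : m ≠ 0) (hp : p.Prime) (hle : maxPrimeFac m ≤ p) :
    maxPrimeFac (m * p) = p := by
  rw [maxPrimeFac, Nat.primeFactors_mul hm hp.ne_zero, Finset.sup_union, hp.primeFactors,
    Finset.sup_singleton]
  exact sup_eq_right.mpr hle

lemma maxPrimeFac_div_maxPrimeFac_le (hn : 1 < n) :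
    maxPrimeFac (n / maxPrimeFac n) ≤ maxPrimeFac n :=
  Finset.sup_mono (Nat.primeFactors_mono
    (Nat.div_dvd_of_dvd (Nat.dvd_of_mem_primeFactors (maxPrimeFac_mem_primeFactors hn))) (by lia))

lemma isAlmostPrime_div_maxPrimeFac {k : ℕ} (hn : Nat.IsAlmostPrime (k + 1) n) :
    Nat.IsAlmostPrime k (n / maxPrimeFac n) := by
  have hn1 := one_lt_of_isAlmostPrime k.succ_ne_zero hn
  rw [← div_maxPrimeFac_mul hn1, mul_comm, add_comm] at hn
  exact isAlmostPrime_of_mul (prime_maxPrimeFac hn1).isAlmostPrime_one hn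

/-- Exchanges the largest prime factor of the first entry with the second entry whenever the second
entry then becomes the largest prime factor of the first, so that the exchange can be undone;
otherwise does nothing. -/
def swapMaxPrimeFac (x : ℕ × ℕ) : ℕ × ℕ :=
  if maxPrimeFac (x.1 / maxPrimeFac x.1) ≤ x.2 then
    (x.1 / maxPrimeFac x.1 * x.2, maxPrimeFac x.1) else x

lemma swapMaxPrimeFac_swapMaxPrimeFac (hn : 1 < n) (hp : p.Prime) :
    swapMaxPrimeFac (swapMaxPrimeFac (n, p)) = (n, p) := by
  by_cases hle : maxPrimeFac (n / maxPrimeFac n) ≤ p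
  · have hm : n / maxPrimeFac n ≠ 0 := fun hm ↦ by
      have := div_maxPrimeFac_mul hn
      lia
    have hmax := maxPrimeFac_mul_prime hm hp hle
    have hle' := maxPrimeFac_div_maxPrimeFac_le hn
    simp only [swapMaxPrimeFac, hle, if_true, hmax, Nat.mul_div_cancel _ hp.pos, hle',
      div_maxPrimeFac_mul hn]
  · simp only [swapMaxPrimeFac, hle, if_false]

lemma swapMaxPrimeFac_mem {k : ℕ} {x : ℕ × ℕ} (hx : x ∈ almostPrimes (k + 1) ×ˢ almostPrimes 1) :
    swapMaxPrimeFac x ∈ almostPrimes (k + 1) ×ˢ almostPrimes 1 := by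
  unfold swapMaxPrimeFac
  split_ifs
  · have hx1 := mem_almostPrimes.mp hx.1
    have hmax := prime_maxPrimeFac (one_lt_of_isAlmostPrime k.succ_ne_zero hx1)
    have hx2 := mem_almostPrimes.mp hx.2
    exact ⟨mem_almostPrimes.mpr ((isAlmostPrime_div_maxPrimeFac hx1).mul hx2),
      mem_almostPrimes.mpr hmax.isAlmostPrime_one⟩
  · exact hx

end MaxPrimeFac

/-- The summand of `f(N_k, h') f(N_1, h) - f(N_k, h) f(N_1, h')` as a double sum. -/
noncomputable def crossTerm (h h' : ℝ) (x : ℕ × ℕ) : ℝ :=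
  transTerm h' x.1 * transTerm h x.2 - transTerm h x.1 * transTerm h' x.2

/-- The denominator of `crossTerm` without the factor `n * p`, in terms of `log n` and `log p`. -/
def crossDenom (h h' a b : ℝ) : ℝ := (a + h) * (a + h') * ((b + h) * (b + h'))

section CrossTerm

variable {h h' : ℝ} {m n p q : ℕ}

lemma crossTerm_eq (hh : 0 ≤ h) (hh' : 0 ≤ h') (hn : 1 < n) (hp : 1 < p) :
    crossTerm h h' (n, p) =
      (h' - h) / (n * p) * ((log n - log p) / crossDenom h h' (log n) (log p)) := by
  have hn0 : (n : ℝ) ≠ 0 := by exact_mod_cast (one_pos.trans hn).ne'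
  have hp0 : (p : ℝ) ≠ 0 := by exact_mod_cast (one_pos.trans hp).ne'
  have hnh := (log_natCast_add_pos hh hn).ne'
  have hnh' := (log_natCast_add_pos hh' hn).ne'
  have hph := (log_natCast_add_pos hh hp).ne'
  have hph' := (log_natCast_add_pos hh' hp).ne'
  simp only [crossTerm, transTerm, crossDenom]
  field_simp
  ring

lemma crossDenom_pos (hh : 0 ≤ h) (hh' : 0 ≤ h') {a b : ℝ} (ha : 0 < a) (hb : 0 < b) :
    0 < crossDenom h h' a b := by
  unfold crossDenom
  positivity

lemma crossTerm_pos (hh : 0 ≤ h) (hlt : h < h') (hp : 1 < p) (hpn : p < n) :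
    0 < crossTerm h h' (n, p) := by
  have hn := hp.trans hpn
  have hh' := hh.trans hlt.le
  rw [crossTerm_eq hh hh' hn hp]
  have hdenom := crossDenom_pos hh hh' (log_natCast_pos hn) (log_natCast_pos hp)
  have hlt_log : log p < log n := log_lt_log (by positivity) (by exact_mod_cast hpn)
  have hnp : (0 : ℝ) < n * p := by positivity
  exact mul_pos (div_pos (sub_pos.mpr hlt) hnp) (div_pos (sub_pos.mpr hlt_log) hdenom)

lemma crossDenom_add_le (hh : 0 ≤ h) (hh' : 0 ≤ h') {a b c : ℝ} (ha : 0 ≤ a) (hb : 0 ≤ b)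
    (hbc : b ≤ c) : crossDenom h h' (a + c) b ≤ crossDenom h h' (a + b) c := by
  have hle (t : ℝ) : (a + c + t) * (b + t) ≤ (a + b + t) * (c + t) := by
    linear_combination mul_le_mul_of_nonneg_left hbc ha
  calc crossDenom h h' (a + c) b = (a + c + h) * (b + h) * ((a + c + h') * (b + h')) := by
        unfold crossDenom
        ring
    _ ≤ (a + b + h) * (c + h) * ((a + b + h') * (c + h')) := by
        have hc := hb.trans hbc
        exact mul_le_mul (hle h) (hle h') (by positivity) (by positivity)
    _ = crossDenom h h' (a + b) c := by
        unfold crossDenom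
        ring

/- Of the numerators `a + c - b` and `a + b - c` only the second can be negative, and it comes with
the larger denominator; the two add up to `2 * a`. -/
lemma sub_div_crossDenom_add_pos (hh : 0 ≤ h) (hh' : 0 ≤ h') {a b c : ℝ} (ha : 0 < a) (hb : 0 < b)
    (hbc : b ≤ c) :
    0 < (a + c - b) / crossDenom h h' (a + c) b + (a + b - c) / crossDenom h h' (a + b) c := by
  have hc := hb.trans_le hbc
  have hpos := crossDenom_pos hh hh' (add_pos ha hc) hb
  have hle := crossDenom_add_le hh hh' ha.le hb.le hbc
  calc 0 < 2 * a / crossDenom h h' (a + b) c := div_pos (by positivity) (hpos.trans_le hle)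
    _ = (a + c - b) / crossDenom h h' (a + b) c + (a + b - c) / crossDenom h h' (a + b) c := by
        ring
    _ ≤ _ := by
        gcongr
        linarith

lemma crossTerm_add_crossTerm_pos (hh : 0 ≤ h) (hlt : h < h') (hm : 1 < m) (hp : 1 < p)
    (hq : 1 < q) : 0 < crossTerm h h' (m * q, p) + crossTerm h h' (m * p, q) := by
  wlog hpq : p ≤ q generalizing p q
  · rw [add_comm]
    exact this hq hp (le_of_not_ge hpq)
  have hh' := hh.trans hlt.le
  have hm0 : (m : ℝ) ≠ 0 := by positivity
  rw [crossTerm_eq hh hh' (one_lt_mul'' hm hq) hp,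
    crossTerm_eq hh hh' (one_lt_mul'' hm hp) hq, Nat.cast_mul, Nat.cast_mul,
    log_mul hm0 (by positivity), log_mul hm0 (by positivity), mul_right_comm (m : ℝ) q p, ← mul_add]
  exact mul_pos (div_pos (sub_pos.mpr hlt) (by positivity)) (sub_div_crossDenom_add_pos hh hh'
    (log_natCast_pos hm) (log_natCast_pos hp) (log_le_log (by positivity) (by exact_mod_cast hpq)))

lemma crossTerm_add_crossTerm_swapMaxPrimeFac_pos (hh : 0 ≤ h) (hlt : h < h') {k : ℕ} (hk : k ≠ 0)
    (hn : Nat.IsAlmostPrime (k + 1) n) (hp : 1 < p) :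
    0 < crossTerm h h' (n, p) + crossTerm h h' (swapMaxPrimeFac (n, p)) := by
  have hn1 := one_lt_of_isAlmostPrime k.succ_ne_zero hn
  have hm := one_lt_of_isAlmostPrime hk (isAlmostPrime_div_maxPrimeFac hn)
  unfold swapMaxPrimeFac
  split_ifs with hle
  · have hpos := crossTerm_add_crossTerm_pos hh hlt hm hp (prime_maxPrimeFac hn1).one_lt
    rwa [div_maxPrimeFac_mul hn1] at hpos
  · have hpn : p < n :=
      (not_le.mp hle).trans_le ((maxPrimeFac_le _).trans (Nat.div_le_self n _))
    exact add_pos (crossTerm_pos hh hlt hp hpn) (crossTerm_pos hh hlt hp hpn)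

end CrossTerm

lemma hasSum_pos_of_add_perm_pos {ι : Type*} [Nonempty ι] {f : ι → ℝ} {s : ℝ} (hf : HasSum f s)
    (e : Equiv.Perm ι) (hpos : ∀ i, 0 < f i + f (e i)) : 0 < s := by
  have hsum := hf.add (e.hasSum_iff.mpr hf)
  have hlt := hsum.summable.tsum_pos (fun i ↦ (hpos i).le) (Classical.arbitrary ι) (hpos _)
  rw [hsum.tsum_eq] at hlt
  exact pos_add_self_iff.mp hlt

/-- `swapMaxPrimeFac` as a permutation of `N_{k+1} × N_1`. -/
def swapMaxPrimeFacPerm (k : ℕ) :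
    Equiv.Perm (almostPrimes (k + 1) ×ˢ almostPrimes 1 : Set (ℕ × ℕ)) :=
  Function.Involutive.toPerm (fun x ↦ ⟨swapMaxPrimeFac x, swapMaxPrimeFac_mem x.2⟩) fun x ↦
    Subtype.ext (swapMaxPrimeFac_swapMaxPrimeFac
      (one_lt_of_isAlmostPrime k.succ_ne_zero (mem_almostPrimes.mp x.2.1))
      (Nat.isAlmostPrime_one_iff.mp (mem_almostPrimes.mp x.2.2)))

section

variable {h h' : ℝ} {k l : ℕ}

lemma hasSum_transTerm_mul_transTerm (hh : 0 ≤ h) (hh' : 0 ≤ h') (hk : k ≠ 0) (hl : l ≠ 0) :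
    HasSum (fun x : (almostPrimes k ×ˢ almostPrimes l : Set (ℕ × ℕ)) ↦
      transTerm h x.1.1 * transTerm h' x.1.2)
      (transSum (almostPrimes k) h * transSum (almostPrimes l) h') := by
  have hk := summable_transTerm hk hh
  have hl := summable_transTerm hl hh'
  exact (Equiv.Set.prod _ _).hasSum_iff.mpr (hk.hasSum.mul hl.hasSum
    (hk.mul_of_nonneg hl (fun n ↦ transTerm_nonneg hh n) fun n ↦ transTerm_nonneg hh' n))

lemma transSum_mul_transSum_lt (hh : 0 ≤ h) (hlt : h < h') (hk : 2 ≤ k) :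
    transSum (almostPrimes k) h * transSum (almostPrimes 1) h' <
      transSum (almostPrimes k) h' * transSum (almostPrimes 1) h := by
  obtain ⟨k, rfl⟩ := Nat.exists_eq_add_of_le' (one_le_two.trans hk)
  have hh' := hh.trans hlt.le
  have hsum := (hasSum_transTerm_mul_transTerm hh' hh k.succ_ne_zero one_ne_zero).sub
    (hasSum_transTerm_mul_transTerm hh hh' k.succ_ne_zero one_ne_zero)
  have : Nonempty (almostPrimes (k + 1) ×ˢ almostPrimes 1 : Set (ℕ × ℕ)) :=
    ⟨(2 ^ (k + 1), 2 ^ 1), mem_almostPrimes.mpr (isAlmostPrime_prime_pow Nat.prime_two _),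
      mem_almostPrimes.mpr (isAlmostPrime_prime_pow Nat.prime_two _)⟩
  refine sub_pos.mp (hasSum_pos_of_add_perm_pos hsum (swapMaxPrimeFacPerm k) fun x ↦ ?_)
  exact crossTerm_add_crossTerm_swapMaxPrimeFac_pos hh hlt (by lia) (mem_almostPrimes.mp x.2.1)
    (one_lt_of_isAlmostPrime one_ne_zero (mem_almostPrimes.mp x.2.2))

lemma transSum_lt_transSum_one (hk : 2 ≤ k) {a : ℝ}
    (heq : transSum (almostPrimes k) a = transSum (almostPrimes 1) a) (hh : 0 ≤ h) (hha : h < a) :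
    transSum (almostPrimes k) h < transSum (almostPrimes 1) h := by
  have hlt := transSum_mul_transSum_lt hh hha hk
  rw [heq, mul_comm (transSum (almostPrimes 1) a)] at hlt
  exact lt_of_mul_lt_mul_right hlt (transSum_pos one_ne_zero (hh.trans hha.le)).le

lemma transSum_one_lt_transSum (hk : 2 ≤ k) {a : ℝ}
    (heq : transSum (almostPrimes k) a = transSum (almostPrimes 1) a) (ha : 0 ≤ a) (hah : a < h) :
    transSum (almostPrimes 1) h < transSum (almostPrimes k) h := by
  have hlt := transSum_mul_transSum_lt ha hah hk
  rw [heq, mul_comm (transSum (almostPrimes 1) a)] at hlt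
  exact lt_of_mul_lt_mul_right hlt (transSum_pos one_ne_zero ha).le

lemma exists_transSum_eq_transSum_one (hk : 2 ≤ k) :
    ∃ a, 0 < a ∧ transSum (almostPrimes k) a = transSum (almostPrimes 1) a := by
  obtain ⟨b, hb, hlt⟩ :=
    ((Filter.eventually_gt_atTop 0).and (eventually_transSum_one_lt_transSum hk)).exists
  have hcont : ContinuousOn (transSum (almostPrimes k) - transSum (almostPrimes 1))
      (Set.Icc 0 b) :=
    ((continuousOn_transSum (by lia)).sub (continuousOn_transSum one_ne_zero)).mono
      Set.Icc_subset_Ici_self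
  have hlt0 := (transSum_zero_le hk).trans_lt lt_transSum_one_zero
  obtain ⟨a, ha, hzero⟩ :=
    intermediate_value_Ioo hb.le hcont ⟨sub_neg.mpr hlt0, sub_pos.mpr hlt⟩
  exact ⟨a, ha.1, sub_eq_zero.mp hzero⟩

end

theorem stmt_9_general (k : ℕ) (hk2 : 2 ≤ k) :
    (∃! hk : ℝ, 0 < hk ∧
      transSum (almostPrimes k) hk = transSum (almostPrimes 1) hk) ∧
    (∀ hk : ℝ, 0 < hk →
      transSum (almostPrimes k) hk = transSum (almostPrimes 1) hk →
      (∀ h : ℝ, 0 ≤ h → h < hk →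
        transSum (almostPrimes k) h < transSum (almostPrimes 1) h) ∧
      (∀ h : ℝ, hk < h →
        transSum (almostPrimes 1) h < transSum (almostPrimes k) h)) := by
  obtain ⟨a, ha, heq⟩ := exists_transSum_eq_transSum_one hk2
  refine ⟨⟨a, ⟨ha, heq⟩, fun b ⟨hb, heq_b⟩ ↦ ?_⟩, fun b hb heq_b ↦
    ⟨fun h ↦ transSum_lt_transSum_one hk2 heq_b, fun h ↦ transSum_one_lt_transSum hk2 heq_b hb.le⟩⟩
  rcases lt_trichotomy b a with hlt | h_eq | hlt
  · exact absurd heq_b (transSum_lt_transSum_one hk2 heq hb.le hlt).ne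
  · exact h_eq
  · exact absurd heq_b (transSum_one_lt_transSum hk2 heq ha.le hlt).ne'

/-- For `2 ≤ k ≤ 20` there is a unique real `h_k > 0` with
`f(N_k,h_k) = f(N₁,h_k)`; moreover `f(N_k,h) < f(N₁,h)` for `0 ≤ h < h_k`
and `f(N_k,h) > f(N₁,h)` for `h > h_k`. -/
theorem stmt_9 (k : ℕ) (hk2 : 2 ≤ k) (hk20 : k ≤ 20) :
    (∃! hk : ℝ, 0 < hk ∧
      transSum (almostPrimes k) hk = transSum (almostPrimes 1) hk) ∧
    (∀ hk : ℝ, 0 < hk →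
      transSum (almostPrimes k) hk = transSum (almostPrimes 1) hk →
      (∀ h : ℝ, 0 ≤ h → h < hk →
        transSum (almostPrimes k) h < transSum (almostPrimes 1) h) ∧
      (∀ h : ℝ, hk < h →
        transSum (almostPrimes 1) h < transSum (almostPrimes k) h)) := stmt_9_general k hk2
end

section
/- For every integer k ≥ 1 and every real c with 0 < c < 2^k, the function s ↦ c^s P_k(s) is strictly decreasing on (1, ∞). -/
open MeasureTheory Real

theorem strictAntiOn_tsum {ι α G : Type*} [Nonempty ι] [Preorder α] [AddCommGroup G]
    [PartialOrder G] [IsOrderedAddMonoid G] [TopologicalSpace G] [IsTopologicalAddGroup G]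
    [OrderClosedTopology G] {f : ι → α → G} {S : Set α} (hf : ∀ i, StrictAntiOn (f i) S)
    (hsum : ∀ s ∈ S, Summable fun i => f i s) :
    StrictAntiOn (fun s => ∑' i, f i s) S := by
  intro s hs t ht hst
  have hterm (i : ι) : f i t < f i s := hf i hs ht hst
  exact (hsum t ht).tsum_strict_mono (hsum s hs) <|
    Pi.lt_def.2 ⟨fun i => (hterm i).le, Classical.arbitrary ι, hterm _⟩

theorem strictAnti_rpow_mul_rpow_neg {c x : ℝ} (hc : 0 < c) (hcx : c < x) :
    StrictAnti fun s : ℝ => c ^ s * x ^ (-s) := by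
  have hx : 0 < x := hc.trans hcx
  have hdiv : (fun s : ℝ => c ^ s * x ^ (-s)) = fun s => (c / x) ^ s := by
    funext s
    rw [div_rpow hc.le hx.le, rpow_neg hx.le, div_eq_mul_inv]
  rw [hdiv]
  exact strictAnti_rpow_of_base_lt_one (div_pos hc hx) ((div_lt_one hx).2 hcx)

theorem strictAntiOn_rpow_mul_tsum_rpow_neg {ι : Type*} [Nonempty ι] {x : ι → ℝ} {c : ℝ}
    {S : Set ℝ} (hc : 0 < c) (hcx : ∀ i, c < x i)
    (hsum : ∀ s ∈ S, Summable fun i => x i ^ (-s)) :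
    StrictAntiOn (fun s => c ^ s * ∑' i, x i ^ (-s)) S := by
  simp only [← tsum_mul_left]
  exact strictAntiOn_tsum (fun i => (strictAnti_rpow_mul_rpow_neg hc (hcx i)).strictAntiOn S)
    fun s hs => (hsum s hs).mul_left (c ^ s)

theorem two_pow_length_primeFactorsList_le {n : ℕ} (hn : n ≠ 0) :
    2 ^ n.primeFactorsList.length ≤ n :=
  calc 2 ^ n.primeFactorsList.length ≤ n.primeFactorsList.prod :=
        List.pow_card_le_prod _ _ fun _ hp => (Nat.prime_of_mem_primeFactorsList hp).two_le
    _ = n := Nat.prod_primeFactorsList hn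

theorem pow_mem_almostPrimes {p : ℕ} (hp : p.Prime) (k : ℕ) : p ^ k ∈ almostPrimes k :=
  ⟨pow_pos hp.pos k, by rw [hp.primeFactorsList_pow, List.length_replicate]⟩

theorem two_pow_le_of_mem_almostPrimes {k n : ℕ} (hn : n ∈ almostPrimes k) : 2 ^ k ≤ n :=
  hn.2 ▸ two_pow_length_primeFactorsList_le hn.1.ne'

theorem almostPrimes_nonempty (k : ℕ) : (almostPrimes k).Nonempty :=
  ⟨2 ^ k, pow_mem_almostPrimes Nat.prime_two k⟩

theorem summable_rpow_neg_subtype (A : Set ℕ) {s : ℝ} (hs : 1 < s) :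
    Summable fun n : A => (n.1 : ℝ) ^ (-s) :=
  (summable_nat_rpow.2 (neg_lt_neg hs)).subtype A

/-- For every `k ≥ 1` and real `0 < c < 2^k`, the function `s ↦ c^s P_k(s)`
is strictly decreasing on `(1, ∞)`. -/
theorem stmt_12 (k : ℕ) (hk : 1 ≤ k) (c : ℝ) (hc : 0 < c) (hc2 : c < 2 ^ k) :
    StrictAntiOn (fun s : ℝ => c ^ s * Pk k s) (Set.Ioi 1) := by
  have : Nonempty (almostPrimes k) := (almostPrimes_nonempty k).to_subtype
  have hlt (n : almostPrimes k) : c < (n.1 : ℝ) :=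
    hc2.trans_le <| mod_cast two_pow_le_of_mem_almostPrimes n.2
  exact strictAntiOn_rpow_mul_tsum_rpow_neg hc hlt fun s hs =>
    summable_rpow_neg_subtype (almostPrimes k) hs
end
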